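/- arXiv:2508.21383 — 4 statements merged into one kernel-verified Lean document; each statement's English description precedes it below -/
import Mathlib

section
/- Let G be a cyclic group of order n ≥ 3. Every zero-sum sequence A over G with ρ(L(A)) = n/2 has the form A = ∏_{g ∈ G₀} (gⁿ(−g)ⁿ)^{n_g}, where G₀ = {g ∈ G : ord(g) = n} is the set of generators and n_g ∈ ℕ₀. -/
def IsMinZS {G : Type*} [AddCommGroup G] (U : Multiset G) : Prop :=
  U ≠ 0 ∧ U.sum = 0 ∧ ∀ V ≤ U, V ≠ 0 → V.sum = 0 → V = U

noncomputable def DavC (G : Type*) [AddCommGroup G] : ℕ :=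
  sSup {n | ∃ U : Multiset G, IsMinZS U ∧ U.card = n}

def LSet {G : Type*} [AddCommGroup G] (A : Multiset G) : Set ℕ :=
  {k | ∃ l : Multiset (Multiset G), l.card = k ∧ (∀ U ∈ l, IsMinZS U) ∧ l.sum = A}

noncomputable def rhoSet (L : Set ℕ) : ℚ := ((sSup L : ℕ) : ℚ) / ((sInf L : ℕ) : ℚ)

def IsIntervalSet (L : Set ℕ) : Prop := L.Nonempty ∧ L = Set.Icc (sInf L) (sSup L)

lemma aux_atom {G : Type*} [AddCommGroup G] [Fintype G] {U : Multiset G} (hU : IsMinZS U)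
    (a b : G) (T : List G) (h : U = a ::ₘ b ::ₘ (T : Multiset G)) :
    U.card ≤ Fintype.card G ∧ (U.card = Fintype.card G → a = b) := by
  classical
  obtain ⟨_, hs, hmin⟩ := hU
  have key : ∀ V : Multiset G, V ≤ U → V ≠ 0 → V.card < U.card → V.sum ≠ 0 := by
    intro V hV h0 hc hz
    have := hmin V hV h0 hz
    subst this
    exact lt_irrefl _ hc
  have hcU : U.card = T.length + 2 := by simp [h]
  let f : ℕ → G := fun i => a + b + (T.take i).sum
  have hinj : Set.InjOn f (Finset.range (T.length + 1) : Finset ℕ) := by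
    have : ∀ i j, i < j → j ≤ T.length → f i ≠ f j := by
      intro i j hij hj he
      have h1 : (T.take j).take i ++ (T.take j).drop i = T.take j := List.take_append_drop _ _
      rw [List.take_take, min_eq_left hij.le] at h1
      have h2 : (((T.take j).drop i : List G) : Multiset G).sum = 0 := by
        have : f j = f i + ((T.take j).drop i).sum := by
          simp only [f]
          rw [← h1, List.sum_append]
          simp [add_assoc]
          rw [h1]
        rw [he] at this
        simpa using this
      refine key _ ?_ ?_ ?_ h2
      · rw [h]
        refine le_trans ?_ (le_trans (Multiset.le_cons_self _ b) (Multiset.le_cons_self _ a))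
        exact Multiset.coe_le.2 (((List.drop_sublist _ _).trans (List.take_sublist _ _)).subperm)
      · intro h0
        have := congrArg Multiset.card h0
        simp at this
        omega
      · simp [hcU]
        omega
    intro i hi j hj he
    simp at hi hj
    rcases lt_trichotomy i j with hl | hl | hl
    · exact absurd he (this i j hl (by omega))
    · exact hl
    · exact absurd he.symm (this j i hl (by omega))
  have hout : ∀ x y : G, U = x ::ₘ y ::ₘ (T : Multiset G) → x + y = a + b →
      x ∉ (Finset.range (T.length + 1)).image f := by
    intro x y hxy hsum hx
    simp only [Finset.mem_image, Finset.mem_range, f] at hx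
    obtain ⟨i, hi, he⟩ := hx
    rw [← hsum, add_assoc] at he
    have he' : (((y :: T.take i : List G)) : Multiset G).sum = 0 := by
      simpa using he
    refine key _ ?_ ?_ ?_ he'
    · rw [hxy]
      refine le_trans ?_ (Multiset.le_cons_self _ x)
      rw [Multiset.cons_coe]
      exact Multiset.coe_le.2 (((List.take_sublist i T).cons_cons y).subperm)
    · simp
    · simp [hcU]
  have ha := hout a b h rfl
  have hb := hout b a (by rw [h, Multiset.cons_swap]) (add_comm _ _)
  have hcard : ((Finset.range (T.length + 1)).image f).card = T.length + 1 := by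
    rw [Finset.card_image_of_injOn hinj]; simp
  have h1 : (insert a ((Finset.range (T.length + 1)).image f)).card = T.length + 2 := by
    rw [Finset.card_insert_of_notMem ha, hcard]
  refine ⟨?_, ?_⟩
  · rw [hcU, ← h1]; exact Finset.card_le_univ _
  · intro hc
    by_contra hab
    have h2 : (insert b (insert a ((Finset.range (T.length + 1)).image f))).card
        = T.length + 3 := by
      rw [Finset.card_insert_of_notMem, h1]
      simp only [Finset.mem_insert, not_or]
      exact ⟨fun h => hab h.symm, hb⟩
    have := Finset.card_le_univ (insert b (insert a ((Finset.range (T.length + 1)).image f)))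
    omega

lemma aux_card_le {G : Type*} [AddCommGroup G] [Fintype G] {U : Multiset G} (hU : IsMinZS U) :
    U.card ≤ Fintype.card G := by
  rcases Nat.lt_or_ge U.card 2 with h | h
  · have : 0 < Fintype.card G := Fintype.card_pos
    omega
  · obtain ⟨a, ha⟩ := Multiset.card_pos_iff_exists_mem.1 (by omega : 0 < U.card)
    obtain ⟨V, rfl⟩ := Multiset.exists_cons_of_mem ha
    simp at h
    obtain ⟨b, hb⟩ := Multiset.card_pos_iff_exists_mem.1 h
    obtain ⟨W, rfl⟩ := Multiset.exists_cons_of_mem hb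
    exact (aux_atom hU a b W.toList (by simp)).1

lemma aux_eq {G : Type*} [AddCommGroup G] [Fintype G] {U : Multiset G} (hU : IsMinZS U)
    (hc : U.card = Fintype.card G) :
    ∃ g, addOrderOf g = Fintype.card G ∧ U = Multiset.replicate (Fintype.card G) g := by
  obtain ⟨a, ha⟩ := Multiset.exists_mem_of_ne_zero hU.1
  have hrep : U = Multiset.replicate (Fintype.card G) a := by
    rw [Multiset.eq_replicate]
    refine ⟨hc, fun b hb => ?_⟩
    obtain ⟨V, rfl⟩ := Multiset.exists_cons_of_mem ha
    rcases Multiset.mem_cons.1 hb with h | h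
    · exact h
    · obtain ⟨W, rfl⟩ := Multiset.exists_cons_of_mem h
      exact ((aux_atom hU a b W.toList (by simp)).2 hc).symm
  refine ⟨a, ?_, hrep⟩
  have hle : addOrderOf a ≤ Fintype.card G := addOrderOf_le_card_univ
  have h := hU.2.2 (Multiset.replicate (addOrderOf a) a)
    (by rw [hrep]; exact (Multiset.replicate_le_replicate a).2 hle)
    (by
      intro h0
      have := congrArg Multiset.card h0
      simp at this
      exact this (isOfFinAddOrder_of_finite a))
    (by simp [addOrderOf_nsmul_eq_zero])
  have := congrArg Multiset.card h
  rw [hc] at this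
  simpa using this

lemma aux_zero {G : Type*} [AddCommGroup G] {U : Multiset G} (hU : IsMinZS U)
    (h : (0 : G) ∈ U) : U = {0} :=
  (hU.2.2 {0} (Multiset.singleton_le.2 h) (by simp) (by simp)).symm

lemma aux_two {G : Type*} [AddCommGroup G] {U : Multiset G} (hU : IsMinZS U)
    (h : (0 : G) ∉ U) : 2 ≤ U.card := by
  by_contra hlt
  have h1 : U.card ≠ 0 := by simpa using hU.1
  obtain ⟨x, rfl⟩ := Multiset.card_eq_one.1 (by omega : U.card = 1)
  have := hU.2.1
  simp at this h
  exact h this.symm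

lemma aux_ub {G : Type*} {l : Multiset (Multiset G)} {p q c : ℕ} [DecidableEq G] {z : G}
    (h : ∀ U ∈ l, p * U.card + q * U.count z ≤ c) :
    p * l.sum.card + q * l.sum.count z ≤ c * l.card := by
  induction l using Multiset.induction_on with
  | empty => simp
  | cons U l ih =>
    have h1 := ih (fun V hV => h V (Multiset.mem_cons_of_mem hV))
    have h2 := h U (Multiset.mem_cons_self _ _)
    simp only [Multiset.sum_cons, Multiset.card_add, Multiset.count_add, Multiset.card_cons]
    nlinarith

lemma aux_lb {G : Type*} {l : Multiset (Multiset G)} {p q c : ℕ} [DecidableEq G] {z : G}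
    (h : ∀ U ∈ l, c ≤ p * U.card + q * U.count z) :
    c * l.card ≤ p * l.sum.card + q * l.sum.count z := by
  induction l using Multiset.induction_on with
  | empty => simp
  | cons U l ih =>
    have h1 := ih (fun V hV => h V (Multiset.mem_cons_of_mem hV))
    have h2 := h U (Multiset.mem_cons_self _ _)
    simp only [Multiset.sum_cons, Multiset.card_add, Multiset.count_add, Multiset.card_cons]
    nlinarith

lemma aux_eq_lb {G : Type*} {l : Multiset (Multiset G)} {c : ℕ}
    (h : ∀ U ∈ l, c ≤ U.card) (hs : l.sum.card ≤ c * l.card) : ∀ U ∈ l, U.card = c := by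
  classical
  intro U hU
  obtain ⟨l', rfl⟩ := Multiset.exists_cons_of_mem hU
  have h1 : c * l'.card ≤ l'.sum.card := by
    by_cases hG : Nonempty G
    · simpa using aux_lb (p := 1) (q := 0) (c := c) (z := hG.some) (l := l')
        (fun V hV => by simpa using h V (Multiset.mem_cons_of_mem hV))
    · have := h U hU
      have : IsEmpty G := not_nonempty_iff.1 hG
      have : U = 0 := Subsingleton.elim _ _
      subst this
      simp at *
      simp [*]
  have h2 := h U hU
  simp only [Multiset.sum_cons, Multiset.card_add, Multiset.card_cons] at hs
  nlinarith

lemma aux_eq_ub {G : Type*} {l : Multiset (Multiset G)} {c : ℕ} (z : G)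
    (h : ∀ U ∈ l, U.card ≤ c) (hs : c * l.card ≤ l.sum.card) : ∀ U ∈ l, U.card = c := by
  classical
  intro U hU
  obtain ⟨l', rfl⟩ := Multiset.exists_cons_of_mem hU
  have h1 : l'.sum.card ≤ c * l'.card := by
    simpa using aux_ub (p := 1) (q := 0) (c := c) (z := z) (l := l')
        (fun V hV => by simpa using h V (Multiset.mem_cons_of_mem hV))
  have h2 := h U hU
  simp only [Multiset.sum_cons, Multiset.card_add, Multiset.card_cons] at hs
  nlinarith

lemma aux_neg {G : Type*} [AddCommGroup G] {l : Multiset (Multiset G)}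
    (h : ∀ U ∈ l, U.map (fun x => -x) = U) : l.sum.map (fun x => -x) = l.sum := by
  induction l using Multiset.induction_on with
  | empty => simp
  | cons U l ih =>
    rw [Multiset.sum_cons, Multiset.map_add, h U (Multiset.mem_cons_self _ _),
      ih (fun V hV => h V (Multiset.mem_cons_of_mem hV))]

lemma aux_dvd {G : Type*} [DecidableEq G] {l : Multiset (Multiset G)} {n : ℕ} {g : G}
    (h : ∀ U ∈ l, n ∣ U.count g) : n ∣ l.sum.count g := by
  induction l using Multiset.induction_on with
  | empty => simp
  | cons U l ih =>
    rw [Multiset.sum_cons, Multiset.count_add]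
    exact dvd_add (h U (Multiset.mem_cons_self _ _))
      (ih (fun V hV => h V (Multiset.mem_cons_of_mem hV)))

lemma aux_mem {G : Type*} {l : Multiset (Multiset G)} {g : G}
    (h : g ∈ l.sum) : ∃ U ∈ l, g ∈ U := by
  induction l using Multiset.induction_on with
  | empty => simp at h
  | cons U l ih =>
    rw [Multiset.sum_cons, Multiset.mem_add] at h
    rcases h with h | h
    · exact ⟨U, Multiset.mem_cons_self _ _, h⟩
    · obtain ⟨V, hV, hg⟩ := ih h
      exact ⟨V, Multiset.mem_cons_of_mem hV, hg⟩

theorem stmt5 {G : Type*} [AddCommGroup G] [Fintype G] (n : ℕ) (hn : 3 ≤ n)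
    (hcyc : IsAddCyclic G) (hcard : Fintype.card G = n)
    (A : Multiset G) (hA : A.sum = 0)
    (hrho : rhoSet (LSet A) = (n : ℚ) / 2) :
    ∃ m : G → ℕ, (∀ g : G, m g ≠ 0 → addOrderOf g = n) ∧
      A = ∑ g : G, m g • (Multiset.replicate n g + Multiset.replicate n (-g)) := by
  classical
  have hnq : (n : ℚ) ≠ 0 := by
    have : n ≠ 0 := by omega
    exact_mod_cast this
  unfold rhoSet at hrho
  have hinf : sInf (LSet A) ≠ 0 := by
    intro h
    rw [h] at hrho
    rw [Nat.cast_zero, div_zero] at hrho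
    exact hnq (by linarith)
  have hne : (LSet A).Nonempty := Nat.nonempty_of_pos_sInf (Nat.pos_of_ne_zero hinf)
  have hbdd : BddAbove (LSet A) := by
    refine ⟨A.card, ?_⟩
    rintro k ⟨l, rfl, hl, rfl⟩
    have := aux_lb (p := 1) (q := 0) (c := 1) (z := (0 : G)) (l := l) (fun U hU => by
      have : U.card ≠ 0 := by simpa using (hl U hU).1
      omega)
    simpa using this
  obtain ⟨l1, hc1, hl1, hs1⟩ := Nat.sSup_mem hne hbdd
  obtain ⟨l2, hc2, hl2, hs2⟩ := Nat.sInf_mem hne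
  have hM : 2 * l1.card = n * l2.card := by
    rw [← hc1, ← hc2] at hrho
    rw [← hc2] at hinf
    have h0 : (l2.card : ℚ) ≠ 0 := by exact_mod_cast hinf
    field_simp at hrho
    have : (2 * l1.card : ℚ) = n * l2.card := by linarith
    exact_mod_cast this
  have e1 := aux_lb (p := 1) (q := 1) (c := 2) (z := (0 : G)) (l := l1) (fun U hU => by
    by_cases h0 : (0 : G) ∈ U
    · rw [aux_zero (hl1 U hU) h0]; simp
    · have := aux_two (hl1 U hU) h0
      omega)
  have e2 := aux_ub (p := 1) (q := n - 1) (c := n) (z := (0 : G)) (l := l2) (fun U hU => by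
    by_cases h0 : (0 : G) ∈ U
    · rw [aux_zero (hl2 U hU) h0]; simp; omega
    · have := aux_card_le (hl2 U hU)
      rw [Multiset.count_eq_zero_of_notMem h0]
      omega)
  rw [hs1] at e1
  rw [hs2] at e2
  have hk : A.count 0 = 0 := by
    by_contra hk
    have : 2 * A.count 0 ≤ (n - 1) * A.count 0 := Nat.mul_le_mul_right _ (by omega)
    omega
  rw [hk] at e1 e2
  have h0A : (0 : G) ∉ A := Multiset.count_eq_zero.1 hk
  have c1 := aux_eq_lb (l := l1) (c := 2) (fun U hU => aux_two (hl1 U hU) (fun h0 => h0A (by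
    rw [← hs1]
    exact Multiset.mem_of_le (Multiset.le_sum_of_mem hU) h0))) (by rw [hs1]; omega)
  have c2 := aux_eq_ub (l := l2) (c := n) (0 : G)
    (fun U hU => hcard ▸ aux_card_le (hl2 U hU)) (by rw [hs2]; omega)
  have hneg : A.map (fun x => -x) = A := by
    rw [← hs1]
    refine aux_neg (fun U hU => ?_)
    obtain ⟨x, y, rfl⟩ := Multiset.card_eq_two.1 (c1 U hU)
    have hxy : x + y = 0 := by simpa using (hl1 _ hU).2.1
    have : y = -x := (neg_eq_of_add_eq_zero_right hxy).symm
    subst this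
    simpa using Multiset.pair_comm (-x) x
  have hcn : ∀ g, A.count (-g) = A.count g := by
    intro g
    conv_lhs => rw [← hneg]
    exact Multiset.count_map_eq_count' _ _ neg_injective g
  have hform : ∀ U ∈ l2, ∃ g, addOrderOf g = n ∧ U = Multiset.replicate n g := by
    intro U hU
    have := aux_eq (hl2 U hU) ((c2 U hU).trans hcard.symm)
    rwa [hcard] at this
  have hdvd : ∀ g, n ∣ A.count g := by
    intro g
    rw [← hs2]
    refine aux_dvd (fun U hU => ?_)
    obtain ⟨x, -, rfl⟩ := hform U hU
    rw [Multiset.count_replicate]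
    split_ifs <;> simp
  have hord : ∀ g ∈ A, addOrderOf g = n := by
    intro g hg
    rw [← hs2] at hg
    obtain ⟨U, hU, hgU⟩ := aux_mem hg
    obtain ⟨x, hx, rfl⟩ := hform U hU
    rw [Multiset.eq_of_mem_replicate hgU]
    exact hx
  let e := Fintype.equivFin G
  let m : G → ℕ := fun g => if e g < e (-g) then A.count g / n else 0
  refine ⟨m, ?_, ?_⟩
  · intro g hg
    apply hord
    by_contra h
    apply hg
    simp [m, Multiset.count_eq_zero_of_notMem h]
  · ext g
    have hcount : (∑ h : G, m h • (Multiset.replicate n h + Multiset.replicate n (-h))).count g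
        = m g * n + m (-g) * n := by
      rw [Multiset.count_sum']
      simp only [Multiset.count_nsmul, Multiset.count_add, Multiset.count_replicate, mul_add,
        Finset.sum_add_distrib, neg_eq_iff_eq_neg]
      simp
    rw [hcount]
    simp only [m, neg_neg, hcn]
    obtain ⟨c, hc⟩ := hdvd g
    by_cases hg : g ∈ A
    · have hne : e g ≠ e (-g) := by
        intro he
        have h1 : g = -g := e.injective he
        have h2 : (2 : ℕ) • g = 0 := by
          rw [two_nsmul]
          nth_rewrite 1 [h1]
          simp
        have := Nat.le_of_dvd (by norm_num) (addOrderOf_dvd_of_nsmul_eq_zero h2)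
        rw [hord g hg] at this
        omega
      have hd := Nat.div_mul_cancel (hdvd g)
      rcases lt_or_gt_of_ne hne with h | h
      · rw [if_pos h, if_neg h.asymm, hd]; simp
      · rw [if_pos h, if_neg h.asymm, hd]; simp
    · simp [Multiset.count_eq_zero_of_notMem hg]
end

section
/- Let G be a finite abelian group with |G| ≥ 3 satisfying Property P. Then there exists A* ∈ B(G) such that for all A ∈ B(G) with ρ(L(A)) = D(G)/2, the length set L(A*A) is a discrete interval with ρ(L(A*A)) = D(G)/2. -/
def PropertyP (G : Type*) [AddCommGroup G] : Prop :=
  ∃ (g₁ g₂ : G) (U₁ U₂ : Multiset G),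
    IsMinZS U₁ ∧ IsMinZS U₂ ∧ U₁.card = DavC G ∧ U₂.card = DavC G ∧
    ({g₁, g₂} : Multiset G) ≤ U₁ ∧ (g₁ + g₂) ∈ U₂

namespace Aux12

open Multiset

variable {G : Type*} [AddCommGroup G]

theorem eq_of_zero_mem {U : Multiset G} (h : IsMinZS U) (h0 : (0 : G) ∈ U) : U = {0} := by
  have := h.2.2 {0} (by simpa using h0) (by simp) (by simp)
  exact this.symm

theorem neg_add_neg (U : Multiset G) : (U.map Neg.neg).map Neg.neg = U := by
  simp

theorem sum_neg (U : Multiset G) : (U.map Neg.neg).sum = - U.sum := by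
  induction U using Multiset.induction with
  | empty => simp
  | cons a s ih => simp [ih]; abel

theorem minzs_neg {U : Multiset G} (h : IsMinZS U) : IsMinZS (U.map Neg.neg) := by
  refine ⟨by simpa using h.1, by rw [sum_neg, h.2.1, neg_zero], ?_⟩
  intro V hV hne hs
  have h1 : V.map Neg.neg ≤ U := by
    have := Multiset.map_le_map (f := (Neg.neg : G → G)) hV
    rwa [neg_add_neg] at this
  have h2 := h.2.2 _ h1 (by simpa using hne) (by rw [sum_neg, hs, neg_zero])
  rw [← h2, neg_add_neg]

theorem card_le_of_minzs [Fintype G] {U : Multiset G} (h : IsMinZS U) :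
    U.card ≤ Fintype.card G := by
  by_contra hlt
  push Not at hlt
  induction U using Quotient.inductionOn with
  | h l =>
  simp only [Multiset.quot_mk_to_coe, Multiset.coe_card] at *
  obtain ⟨i, j, hij, heq⟩ := Fintype.exists_ne_map_eq_of_card_lt
    (fun i : Fin l.length => (l.take i.1).sum) (by simpa using hlt)
  wlog hl : i < j generalizing i j
  · exact this j i hij.symm heq.symm (lt_of_le_of_ne (not_lt.mp hl) hij.symm)
  have hl' : i.1 < j.1 := hl
  have e : l.take j.1 = l.take i.1 ++ (l.take j.1).drop i.1 := by
    conv_lhs => rw [← List.take_append_drop i.1 (l.take j.1)]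
    rw [List.take_take, min_eq_left hl'.le]
  have hs : ((l.take j.1).drop i.1).sum = 0 := by
    have h1 := congrArg List.sum e
    rw [List.sum_append] at h1
    rw [← heq] at h1
    simpa using h1
  have hlen : ((l.take j.1).drop i.1).length = j.1 - i.1 := by
    simp [List.length_drop, List.length_take]
  have hle : (((l.take j.1).drop i.1 : List G) : Multiset G) ≤ (l : Multiset G) := by
    rw [Multiset.coe_le]
    exact ((List.drop_sublist _ _).trans (List.take_sublist _ _)).subperm
  have h3 := h.2.2 _ hle (by
    intro h0
    have := congrArg Multiset.card h0
    rw [Multiset.coe_card, hlen] at this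
    simp at this
    omega) (by simpa using hs)
  have := congrArg Multiset.card h3
  rw [Multiset.coe_card, hlen, Multiset.coe_card] at this
  have := j.2
  omega

theorem bdd [Fintype G] : BddAbove {n | ∃ U : Multiset G, IsMinZS U ∧ U.card = n} :=
  ⟨Fintype.card G, by rintro n ⟨U, hU, rfl⟩; exact card_le_of_minzs hU⟩

theorem card_le_dav [Fintype G] {U : Multiset G} (h : IsMinZS U) : U.card ≤ DavC G :=
  le_csSup bdd ⟨U, h, rfl⟩

theorem minzs_three {a b c : G} (ha : a ≠ 0) (hb : b ≠ 0) (hc : c ≠ 0) (h : a + b + c = 0) :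
    IsMinZS ({a, b, c} : Multiset G) := by
  refine ⟨by simp, by simpa [add_assoc] using h, ?_⟩
  intro V hV hne hs
  obtain ⟨W, hW⟩ := Multiset.le_iff_exists_add.mp hV
  have hc3 := congrArg Multiset.card hW
  have hsW : W.sum = 0 := by
    have := congrArg Multiset.sum hW
    rw [Multiset.sum_add, hs] at this
    simp at this
    rw [← this, ← add_assoc, h]
  have key : ∀ X : Multiset G, X ≤ {a, b, c} → X.sum = 0 → X.card ≠ 1 := by
    intro X hX hs h1
    obtain ⟨x, rfl⟩ := Multiset.card_eq_one.mp h1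
    simp at hs
    subst hs
    have : (0 : G) ∈ ({a, b, c} : Multiset G) := by simpa using hX
    simp at this
    rcases this with h | h | h
    · exact ha h.symm
    · exact hb h.symm
    · exact hc h.symm
  have k1 := key V hV hs
  have k2 := key W (by rw [hW]; exact Multiset.le_add_left _ _) hsW
  have k3 : V.card ≠ 0 := by simpa using hne
  simp at hc3
  have : W.card = 0 := by omega
  rw [Multiset.card_eq_zero] at this
  rw [hW, this, add_zero]

theorem three_le_dav [Fintype G] (hcard : 3 ≤ Fintype.card G) : 3 ≤ DavC G := by
  obtain ⟨a, b, c, ha, hb, hc⟩ : ∃ a b c : G, a ≠ 0 ∧ b ≠ 0 ∧ (c ≠ 0 ∧ a + b + c = 0) := by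
    obtain ⟨x, y, z, hxy, hxz, hyz⟩ := Fintype.two_lt_card_iff.mp hcard
    -- two distinct nonzero elements
    have hg : ∃ g h : G, g ≠ 0 ∧ h ≠ 0 ∧ g ≠ h :=
      ⟨y - x, z - x, sub_ne_zero.mpr hxy.symm, sub_ne_zero.mpr hxz.symm,
        fun e => hyz (sub_left_injective e)⟩
    obtain ⟨g, h, hg, hh, hgh⟩ := hg
    by_cases e : g + h = 0
    · refine ⟨g, g, -(g + g), hg, hg, ?_, by abel⟩
      intro h2
      rw [neg_eq_zero] at h2
      exact hgh (add_left_cancel (h2.trans e.symm))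
    · exact ⟨g, h, -(g + h), hg, hh, neg_ne_zero.mpr e, by abel⟩
  have := card_le_dav (minzs_three ha hb hc.1 hc.2)
  simpa using this

/-- every zero-sum multiset factors -/
theorem exists_fact (A : Multiset G) (hA : A.sum = 0) :
    ∃ l : Multiset (Multiset G), (∀ U ∈ l, IsMinZS U) ∧ l.sum = A := by
  induction hn : A.card using Nat.strong_induction_on generalizing A with
  | _ n ih =>
  by_cases h0 : A = 0
  · exact ⟨0, by simp, by simp [h0]⟩
  by_cases hm : IsMinZS A
  · exact ⟨{A}, by simpa using hm, by simp⟩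
  have : ∃ V ≤ A, V ≠ 0 ∧ V.sum = 0 ∧ V ≠ A := by
    by_contra hcon
    push Not at hcon
    exact hm ⟨h0, hA, hcon⟩
  obtain ⟨V, hV, hne, hs, hVA⟩ := this
  obtain ⟨W, rfl⟩ := Multiset.le_iff_exists_add.mp hV
  have hW : W ≠ 0 := by rintro rfl; simp at hVA
  have c1 : 0 < V.card := Multiset.card_pos.mpr hne
  have c2 : 0 < W.card := Multiset.card_pos.mpr hW
  rw [Multiset.card_add] at hn
  obtain ⟨l1, h1, e1⟩ := ih V.card (by omega) V hs rfl
  obtain ⟨l2, h2, e2⟩ := ih W.card (by omega) W (by simpa [hs] using hA) rfl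
  refine ⟨l1 + l2, ?_, by simp [e1, e2]⟩
  intro U hU
  rcases Multiset.mem_add.mp hU with h | h
  · exact h1 U h
  · exact h2 U h

theorem card_sum_cons (l : Multiset (Multiset G)) (hl : ∀ U ∈ l, IsMinZS U) :
    l.card ≤ l.sum.card := by
  induction l using Multiset.induction with
  | empty => simp
  | cons U l ih =>
    have := ih (fun V hV => hl V (Multiset.mem_cons_of_mem hV))
    have h1 : 0 < U.card := Multiset.card_pos.mpr (hl U (Multiset.mem_cons_self _ _)).1
    simp
    omega

open Classical in
theorem bounds [Fintype G] (hD : 3 ≤ DavC G) (l : Multiset (Multiset G))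
    (hl : ∀ U ∈ l, IsMinZS U) :
    2 * l.card ≤ l.sum.card + l.sum.count 0 ∧
    l.sum.card + (DavC G - 1) * l.sum.count 0 ≤ DavC G * l.card := by
  induction l using Multiset.induction with
  | empty => simp
  | cons U l ih =>
    obtain ⟨i1, i2⟩ := ih (fun V hV => hl V (Multiset.mem_cons_of_mem hV))
    have hU := hl U (Multiset.mem_cons_self _ _)
    have h1 : 0 < U.card := Multiset.card_pos.mpr hU.1
    have h2 := card_le_dav hU
    have h3 : 2 ≤ U.card + U.count 0 ∧ U.card + (DavC G - 1) * U.count 0 ≤ DavC G := by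
      by_cases h0 : (0 : G) ∈ U
      · rw [eq_of_zero_mem hU h0]
        simp
        omega
      · rw [Multiset.count_eq_zero_of_notMem h0]
        refine ⟨?_, by simpa using h2⟩
        by_contra hlt
        have : U.card = 1 := by omega
        obtain ⟨x, rfl⟩ := Multiset.card_eq_one.mp this
        have := hU.2.1
        simp at this h0
        exact h0 this.symm
    simp only [Multiset.sum_cons, Multiset.card_add, Multiset.count_add, Multiset.card_cons,
      mul_add]
    constructor <;> omega

theorem add_mem {A B : Multiset G} {a b : ℕ} (ha : a ∈ LSet A) (hb : b ∈ LSet B) :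
    a + b ∈ LSet (A + B) := by
  obtain ⟨l1, c1, h1, e1⟩ := ha
  obtain ⟨l2, c2, h2, e2⟩ := hb
  refine ⟨l1 + l2, by simp [c1, c2], ?_, by simp [e1, e2]⟩
  intro U hU
  rcases Multiset.mem_add.mp hU with h | h
  · exact h1 U h
  · exact h2 U h

theorem one_mem {A : Multiset G} (h : IsMinZS A) : 1 ∈ LSet A :=
  ⟨{A}, by simp, by simpa using h, by simp⟩

theorem zero_mem : 0 ∈ LSet (0 : Multiset G) := ⟨0, by simp, by simp, by simp⟩

theorem minzs_pair {g : G} (hg : g ≠ 0) : IsMinZS ({g, -g} : Multiset G) := by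
  refine ⟨by simp, by simp, ?_⟩
  intro V hV hne hs
  have hc := Multiset.card_le_card hV
  simp at hc
  have h0 : 0 < V.card := Multiset.card_pos.mpr hne
  have h1 : V.card ≠ 1 := by
    intro h1
    obtain ⟨x, rfl⟩ := Multiset.card_eq_one.mp h1
    simp at hs
    subst hs
    simp at hV
    rcases hV with h | h
    · exact hg h.symm
    · exact hg h
  exact Multiset.eq_of_le_of_card_le hV (by simp; omega)

theorem cons_pair (g : G) (E : Multiset G) :
    (g ::ₘ E) + (g ::ₘ E).map Neg.neg = {g, -g} + (E + E.map Neg.neg) := by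
  rw [Multiset.map_cons, Multiset.insert_eq_cons]
  simp only [← Multiset.singleton_add]
  abel

theorem pairs_mem (E : Multiset G) (h0 : (0 : G) ∉ E) : E.card ∈ LSet (E + E.map Neg.neg) := by
  induction E using Multiset.induction with
  | empty => simpa using zero_mem
  | cons g E ih =>
    simp only [Multiset.mem_cons, not_or] at h0
    rw [cons_pair, Multiset.card_cons, add_comm E.card 1]
    exact add_mem (one_mem (minzs_pair (Ne.symm h0.1))) (ih h0.2)

theorem mem_sum_of {l : Multiset (Multiset G)} {g : G} (h : g ∈ l.sum) :
    ∃ V l', l = V ::ₘ l' ∧ g ∈ V := by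
  have h' : g ∈ l.join := h
  obtain ⟨V, hV, hg⟩ := Multiset.mem_join.mp h'
  obtain ⟨l', rfl⟩ := Multiset.exists_cons_of_mem hV
  exact ⟨V, l', rfl, hg⟩

/-- chain lemma -/
theorem chain [Fintype G] (E : Multiset G) (h0 : (0 : G) ∉ E) :
    ∀ m ∈ LSet (E + E.map Neg.neg), ∀ n, m ≤ n → n ≤ E.card →
    ∃ k ∈ LSet (E + E.map Neg.neg), k ≤ n ∧ n ≤ k + 2 * DavC G := by
  induction E using Multiset.induction with
  | empty =>
    intro m hm n hmn hn
    exact ⟨m, hm, hmn, by simp at hn; omega⟩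
  | cons g E ih =>
    simp only [Multiset.mem_cons, not_or] at h0
    intro m hm n hmn hn
    by_cases hnear : n ≤ m + 2 * DavC G
    · exact ⟨m, hm, hmn, hnear⟩
    push Not at hnear
    rw [cons_pair] at hm ⊢
    obtain ⟨l, rfl, hl, e⟩ := hm
    obtain ⟨V, l', rfl, hgV⟩ := mem_sum_of (l := l) (g := g) (by rw [e]; simp)
    obtain ⟨V, rfl⟩ := Multiset.exists_cons_of_mem hgV
    have hV := hl _ (Multiset.mem_cons_self _ _)
    have hcV := card_le_dav hV
    have hVs := hV.2.1
    have hl' : ∀ U ∈ l', IsMinZS U := fun U hU => hl U (Multiset.mem_cons_of_mem hU)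
    simp only [Multiset.sum_cons, Multiset.insert_eq_cons, Multiset.cons_add,
      Multiset.cons_inj_right, Multiset.singleton_add] at e
    have hmem : -g ∈ V + l'.sum := by rw [e]; simp
    -- the smaller factorization
    obtain ⟨m', hm', hle⟩ : ∃ m' ∈ LSet (E + E.map Neg.neg), m' + 1 ≤
        (Multiset.card ((g ::ₘ V) ::ₘ l')) + 2 * DavC G := by
      rcases Multiset.mem_add.mp hmem with h | h
      · obtain ⟨V, rfl⟩ := Multiset.exists_cons_of_mem h
        obtain ⟨q, hq, eq⟩ := exists_fact V (by simpa using hVs)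
        have hqc := card_sum_cons q hq
        rw [eq] at hqc
        simp only [Multiset.cons_add, Multiset.cons_inj_right] at e
        rw [← e]
        refine ⟨_, add_mem ⟨q, rfl, hq, eq⟩ ⟨l', rfl, hl', rfl⟩, ?_⟩
        simp at hcV ⊢
        omega
      · obtain ⟨V', l'', rfl, hgV'⟩ := mem_sum_of h
        obtain ⟨V', rfl⟩ := Multiset.exists_cons_of_mem hgV'
        have hV' := hl' _ (Multiset.mem_cons_self _ _)
        have hcV' := card_le_dav hV'
        have hVs' := hV'.2.1
        have hl'' : ∀ U ∈ l'', IsMinZS U := fun U hU => hl' U (Multiset.mem_cons_of_mem hU)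
        obtain ⟨q, hq, eq⟩ := exists_fact (V + V') (by
          simp only [Multiset.sum_cons, Multiset.sum_add] at *
          have : V.sum + V'.sum = (g + V.sum) + (-g + V'.sum) := by abel
          rw [this, hVs, hVs', add_zero])
        have hqc := card_sum_cons q hq
        rw [eq] at hqc
        simp only [Multiset.sum_cons, Multiset.cons_add, Multiset.add_cons,
          Multiset.cons_inj_right] at e
        rw [← e, ← add_assoc]
        refine ⟨_, add_mem ⟨q, rfl, hq, eq⟩ ⟨l'', rfl, hl'', rfl⟩, ?_⟩
        simp at hcV hcV' hqc ⊢
        omega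
    simp only [Multiset.card_cons] at hn
    obtain ⟨k, hk, h1, h2⟩ := ih h0.2 m' hm' (n - 1) (by omega) (by omega)
    exact ⟨1 + k, add_mem (one_mem (minzs_pair (Ne.symm h0.1))) hk, by omega, by omega⟩

theorem nsmul_mem {B : Multiset G} {a : ℕ} (h1 : a ∈ LSet B) (h2 : a + 1 ∈ LSet B) (k : ℕ) :
    ∀ j ≤ k, k * a + j ∈ LSet (k • B) := by
  induction k with
  | zero => intro j hj; simpa [Nat.le_zero.mp hj] using zero_mem
  | succ k ih =>
    intro j hj
    rw [succ_nsmul]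
    rcases Nat.lt_or_ge j (k + 1) with h | h
    · have := add_mem (ih j (by omega)) h1
      convert this using 1
      ring
    · have := add_mem (ih k le_rfl) h2
      obtain rfl : j = k + 1 := by omega
      convert this using 1
      ring

theorem interval_mem {B : Multiset G} {D : ℕ} (hD : 3 ≤ D) (h4 : 4 ∈ LSet B) (h5 : 5 ∈ LSet B)
    (hD1 : 2 * D - 1 ∈ LSet B) (hD2 : 2 * D ∈ LSet B) (n : ℕ) (hn1 : 4 * (2 * D) ≤ n)
    (hn2 : n ≤ 2 * D * (2 * D)) : n ∈ LSet ((2 * D) • B) := by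
  obtain ⟨d, rfl⟩ : ∃ d, D = d + 3 := ⟨D - 3, by omega⟩
  have comb : ∀ i p, i + p = 2 * (d + 3) → 4 * i + (2 * d + 5) * p ≤ n →
      n ≤ 5 * i + (2 * d + 6) * p → n ∈ LSet ((2 * (d + 3)) • B) := by
    intro i p hip h1 h2
    rw [← hip, add_nsmul]
    obtain ⟨j, hj⟩ := Nat.exists_eq_add_of_le h1
    have hjp : j ≤ i + p := by
      subst hj
      nlinarith
    have a1 := nsmul_mem h4 h5 i (min j i) (min_le_right _ _)
    have a2 := nsmul_mem (a := 2 * d + 5) hD1 hD2 p (j - min j i) (by omega)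
    have := add_mem a1 a2
    convert this using 1
    have : j = min j i + (j - min j i) := by omega
    rw [hj]
    nlinarith
  by_contra hcon
  have ind : ∀ i p, i + p = 2 * (d + 3) → n ≤ 5 * i + (2 * d + 6) * p := by
    intro i
    induction i with
    | zero => 
      intro p hp
      have : p = 2 * (d + 3) := by omega
      subst this
      nlinarith
    | succ i ih =>
      intro p hp
      have h1 := ih (p + 1) (by omega)
      by_contra h2
      push Not at h2
      exact hcon (comb i (p + 1) (by omega) (by nlinarith) h1)
  exact hcon (comb (2 * (d + 3)) 0 (by omega) (by omega) (ind _ 0 (by omega)))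

theorem base [Fintype G] (hD : 3 ≤ DavC G) (hP : PropertyP G) :
    ∃ E : Multiset G, (0 : G) ∉ E ∧ E.card = 2 * DavC G ∧ 4 ∈ LSet (E + E.map Neg.neg) ∧
      5 ∈ LSet (E + E.map Neg.neg) ∧ 2 * DavC G - 1 ∈ LSet (E + E.map Neg.neg) := by
  obtain ⟨g₁, g₂, U₁, U₂, m1, m2, c1, c2, hle, hmem⟩ := hP
  obtain ⟨S, rfl⟩ := Multiset.le_iff_exists_add.mp hle
  obtain ⟨T, rfl⟩ := Multiset.exists_cons_of_mem hmem
  simp only [Multiset.insert_eq_cons, Multiset.cons_add, Multiset.singleton_add] at *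
  have z1 : (0 : G) ∉ g₁ ::ₘ g₂ ::ₘ S := by
    intro h
    have := congrArg Multiset.card (eq_of_zero_mem m1 h)
    rw [c1] at this
    simp at this
    omega
  have z2 : (0 : G) ∉ (g₁ + g₂) ::ₘ T := by
    intro h
    have := congrArg Multiset.card (eq_of_zero_mem m2 h)
    rw [c2] at this
    simp at this
    omega
  have s1 := m1.2.1
  have s2 := m2.2.1
  have n1 := minzs_neg m1
  have n2 := minzs_neg m2
  have e : ∀ X Y : Multiset G, (X + Y) + (X + Y).map Neg.neg =
      (X + Y) + (X.map Neg.neg + Y.map Neg.neg) := by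
    intro X Y; rw [Multiset.map_add]
  have two := add_mem (one_mem n1) (one_mem n2)
  refine ⟨(g₁ ::ₘ g₂ ::ₘ S) + ((g₁ + g₂) ::ₘ T), ?_, ?_, ?_, ?_, ?_⟩
  · rw [Multiset.mem_add, not_or]; exact ⟨z1, z2⟩
  · rw [Multiset.card_add, c1, c2]; ring
  · rw [e]
    exact add_mem (add_mem (one_mem m1) (one_mem m2)) two
  · rw [e]
    have hS : IsMinZS ((g₁ + g₂) ::ₘ S) := by
      refine ⟨by simp, by simpa [add_assoc] using s1, ?_⟩
      intro V hV hne hs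
      by_cases hh : (g₁ + g₂) ∈ V
      · obtain ⟨V, rfl⟩ := Multiset.exists_cons_of_mem hh
        have hV' : V ≤ S := (Multiset.cons_le_cons_iff _).mp hV
        have := m1.2.2 (g₁ ::ₘ g₂ ::ₘ V)
          (Multiset.cons_le_cons _ (Multiset.cons_le_cons _ hV')) (by simp)
          (by simpa [add_assoc] using hs)
        simp only [Multiset.cons_inj_right] at this
        rw [this]
      · have hV' : V ≤ S := (Multiset.le_cons_of_notMem hh).mp hV
        have h3 := m1.2.2 V (hV'.trans ((Multiset.le_cons_self _ _).trans
          (Multiset.le_cons_self _ _))) hne hs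
        have := Multiset.card_le_card hV'
        rw [h3] at this
        simp at this
    have hT : ∀ V ≤ T, V.sum = 0 → V = 0 := by
      intro V hV hs
      by_contra hne
      have h3 := m2.2.2 V (hV.trans (Multiset.le_cons_self _ _)) hne hs
      have := Multiset.card_le_card hV
      rw [h3] at this
      simp at this
    have hl0 : ∀ l : Multiset (Multiset G), (∀ U ∈ l, IsMinZS U) → l.sum ≤ T → l = 0 := by
      intro l hl hle
      have hs : ∀ q : Multiset (Multiset G), (∀ U ∈ q, IsMinZS U) → q.sum.sum = 0 := by
        intro q
        induction q using Multiset.induction with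
        | empty => simp
        | cons U q ih =>
          intro h
          simp [(h U (by simp)).2.1, ih (fun V hV => h V (Multiset.mem_cons_of_mem hV))]
      have h1 := hT _ hle (hs l hl)
      have h2 := card_sum_cons l hl
      rw [h1] at h2
      simpa using h2
    have hXY : 2 ∈ LSet (g₁ ::ₘ g₂ ::ₘ T) := by
      obtain ⟨l, hl, el⟩ := exists_fact (g₁ ::ₘ g₂ ::ₘ T) (by simpa [add_assoc] using s2)
      refine ⟨l, ?_, hl, el⟩
      obtain ⟨X, l1, rfl, hX⟩ := mem_sum_of (l := l) (g := g₁) (by rw [el]; simp)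
      have hXm := hl X (by simp)
      have hl1 : ∀ U ∈ l1, IsMinZS U := fun U hU => hl U (Multiset.mem_cons_of_mem hU)
      obtain ⟨X, rfl⟩ := Multiset.exists_cons_of_mem hX
      simp only [Multiset.sum_cons, Multiset.cons_add, Multiset.cons_inj_right] at el
      have hg2 : g₂ ∈ X + l1.sum := by rw [el]; simp
      rcases Multiset.mem_add.mp hg2 with h | h
      · obtain ⟨X, rfl⟩ := Multiset.exists_cons_of_mem h
        simp only [Multiset.cons_add, Multiset.cons_inj_right] at el
        have := hl0 l1 hl1 (by rw [← el]; exact Multiset.le_add_left _ _)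
        subst this
        have h5 := card_le_dav hXm
        simp at el
        subst el
        simp at h5 c2
        omega
      · obtain ⟨Y, l2, rfl, hY⟩ := mem_sum_of h
        obtain ⟨Y, rfl⟩ := Multiset.exists_cons_of_mem hY
        simp only [Multiset.sum_cons, Multiset.cons_add, Multiset.add_cons,
          Multiset.cons_inj_right] at el
        have := hl0 l2 (fun U hU => hl1 U (Multiset.mem_cons_of_mem hU))
          (by rw [← el, ← add_assoc]; exact Multiset.le_add_left _ _)
        subst this
        simp
    have := add_mem (add_mem (one_mem hS) hXY) two
    convert this using 2
    simp only [← Multiset.singleton_add]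
    abel
  · simp only [Multiset.mem_cons, not_or] at z1 z2
    have w : IsMinZS ({g₁, g₂, -(g₁ + g₂)} : Multiset G) :=
      minzs_three (Ne.symm z1.1) (Ne.symm z1.2.1) (neg_ne_zero.mpr (Ne.symm z2.1)) (by abel)
    have p := pairs_mem (S + T) (by rw [Multiset.mem_add, not_or]; exact ⟨z1.2.2, z2.2⟩)
    have := add_mem (add_mem (one_mem w) (one_mem (minzs_neg w))) p
    convert this using 2
    · simp only [Multiset.insert_eq_cons, Multiset.map_add, Multiset.map_cons, Multiset.map_singleton, neg_neg,
        ← Multiset.singleton_add]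
      abel
    · simp at c1 c2 ⊢
      omega

/-- multisets that attain the elasticity -/
theorem extremal [Fintype G] (hD : 3 ≤ DavC G) (A : Multiset G) (hA : A.sum = 0)
    (hr : rhoSet (LSet A) = (DavC G : ℚ) / 2) :
    ∃ E : Multiset G, (0 : G) ∉ E ∧ A = E + E.map Neg.neg ∧
      ∃ m ∈ LSet A, 2 * E.card = DavC G * m := by
  classical
  obtain ⟨l0, hl0, el0⟩ := exists_fact A hA
  have hne : (LSet A).Nonempty := ⟨_, l0, rfl, hl0, el0⟩
  have hb : BddAbove (LSet A) := ⟨A.card, by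
    rintro k ⟨l, rfl, hl, rfl⟩
    exact card_sum_cons l hl⟩
  have hm := Nat.sInf_mem hne
  have hM := Nat.sSup_mem hne hb
  unfold rhoSet at hr
  set m := sInf (LSet A)
  set M := sSup (LSet A)
  have hDq : (3 : ℚ) ≤ DavC G := by exact_mod_cast hD
  have hm0 : (m : ℚ) ≠ 0 := by
    intro h
    rw [h, div_zero] at hr
    linarith
  have h2 : 2 * M = DavC G * m := by
    rw [div_eq_div_iff hm0 (by norm_num)] at hr
    have : (2 * M : ℚ) = DavC G * m := by linarith
    exact_mod_cast this
  obtain ⟨l, cl, hl, el⟩ := hM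
  obtain ⟨l', cl', hl', el'⟩ := id hm
  have b1 := (bounds hD l hl).1
  have b2 := (bounds hD l' hl').2
  rw [el, cl] at b1
  rw [el', cl'] at b2
  have z0 : A.count 0 = 0 := by
    obtain ⟨d, hd⟩ : ∃ d, DavC G = d + 3 := ⟨DavC G - 3, by omega⟩
    rw [hd] at b2 h2
    simp only [Nat.add_succ_sub_one] at b2
    by_contra hz
    have : 0 < A.count 0 := Nat.pos_of_ne_zero hz
    nlinarith
  rw [z0] at b1 b2
  have hc : A.card = 2 * M := by simp at b1 b2; omega
  have h0A : (0 : G) ∉ A := Multiset.count_eq_zero.mp z0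
  have key : ∀ q : Multiset (Multiset G), (∀ U ∈ q, IsMinZS U) → (0 : G) ∉ q.sum →
      q.sum.card ≤ 2 * q.card → ∃ E : Multiset G, q.sum = E + E.map Neg.neg := by
    intro q
    induction q using Multiset.induction with
    | empty => intro _ _ _; exact ⟨0, by simp⟩
    | cons U q ih =>
      intro hq hz hcard
      have hq' : ∀ V ∈ q, IsMinZS V := fun V hV => hq V (Multiset.mem_cons_of_mem hV)
      have hU := hq U (by simp)
      simp only [Multiset.sum_cons, Multiset.mem_add, not_or] at hz
      have b3 := (bounds hD q hq').1
      rw [Multiset.count_eq_zero_of_notMem hz.2] at b3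
      have b4 := (bounds hD {U} (by simpa using hU)).1
      simp only [Multiset.sum_singleton, Multiset.card_singleton] at b4
      rw [Multiset.count_eq_zero_of_notMem hz.1] at b4
      simp only [Multiset.sum_cons, Multiset.card_add, Multiset.card_cons] at hcard
      obtain ⟨E, hE⟩ := ih hq' hz.2 (by omega)
      obtain ⟨x, y, rfl⟩ := Multiset.card_eq_two.mp (show U.card = 2 by omega)
      have hs := hU.2.1
      simp at hs
      have hy : y = -x := (neg_eq_of_add_eq_zero_right hs).symm
      subst hy
      refine ⟨x ::ₘ E, ?_⟩
      rw [cons_pair, Multiset.sum_cons, hE]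
  obtain ⟨E, hE⟩ := key l hl (by rw [el]; exact h0A) (by rw [el, cl]; omega)
  rw [el] at hE
  refine ⟨E, ?_, hE, m, hm, ?_⟩
  · intro h; apply h0A; rw [hE]; exact Multiset.mem_add.mpr (Or.inl h)
  · rw [hE] at hc
    simp at hc
    omega

end Aux12

theorem stmt12 {G : Type*} [AddCommGroup G] [Fintype G] (hcard : 3 ≤ Fintype.card G)
    (hP : PropertyP G) :
    ∃ Astar : Multiset G, Astar.sum = 0 ∧
      ∀ A : Multiset G, A.sum = 0 → rhoSet (LSet A) = (DavC G : ℚ) / 2 →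
        IsIntervalSet (LSet (Astar + A)) ∧
        rhoSet (LSet (Astar + A)) = (DavC G : ℚ) / 2 := by
  classical
  have hD := Aux12.three_le_dav hcard
  obtain ⟨F, hF0, hFc, h4, h5, h6⟩ := Aux12.base hD hP
  have h7 := Aux12.pairs_mem F hF0
  rw [hFc] at h7
  have hIntv := Aux12.interval_mem hD h4 h5 h6 h7
  refine ⟨(2 * DavC G) • (F + F.map Neg.neg), ?_, ?_⟩
  · rw [Multiset.sum_nsmul, Multiset.sum_add, Aux12.sum_neg, add_neg_cancel, smul_zero]
  intro A hA hr
  obtain ⟨E, hE0, hAE, m, hm, hmE⟩ := Aux12.extremal hD A hA hr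
  have hch := Aux12.chain E hE0
  have hpe := Aux12.pairs_mem E hE0
  rw [← hAE] at hch hpe
  set D := DavC G with hDdef
  have hDD : 4 * (2 * D) + 2 * D ≤ 2 * D * (2 * D) := by nlinarith
  have hm1 : m ≠ 0 := by
    rintro rfl
    have hE : E = 0 := by
      rw [← Multiset.card_eq_zero]; omega
    subst hE
    simp at hAE
    subst hAE
    have : LSet (0 : Multiset G) = {0} := by
      ext k
      constructor
      · rintro ⟨l, rfl, hl, e⟩
        have := Aux12.card_sum_cons l hl
        rw [e] at this
        simpa using this
      · rintro rfl
        exact Aux12.zero_mem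
    rw [this] at hr
    simp only [rhoSet, csInf_singleton, Nat.cast_zero, div_zero] at hr
    have : (3 : ℚ) ≤ D := by exact_mod_cast hD
    linarith
  have hcardT : ((2 * D) • (F + F.map Neg.neg) + A).card = D * (4 * (2 * D) + m) := by
    rw [hAE]
    simp [hFc]
    nlinarith
  have hzT : (0 : G) ∉ (2 * D) • (F + F.map Neg.neg) + A := by
    have hz : ∀ X : Multiset G, (0 : G) ∉ X → (0 : G) ∉ X + X.map Neg.neg := by
      intro X hX; simpa using hX
    rw [Multiset.mem_add, not_or]
    refine ⟨fun h => hz F hF0 (Multiset.mem_of_mem_nsmul h), ?_⟩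
    rw [hAE]
    exact hz E hE0
  have hL : LSet ((2 * D) • (F + F.map Neg.neg) + A) =
      Set.Icc (4 * (2 * D) + m) (2 * D * (2 * D) + E.card) := by
    ext n
    constructor
    · rintro ⟨l, rfl, hl, e⟩
      obtain ⟨b1, b2⟩ := Aux12.bounds hD l hl
      rw [e, Multiset.count_eq_zero_of_notMem hzT, hcardT] at b1 b2
      constructor
      · have : D * (4 * (2 * D) + m) ≤ D * l.card := by simpa using b2
        exact Nat.le_of_mul_le_mul_left this (by omega)
      · nlinarith
    · rintro ⟨h1, h2⟩
      by_cases hc : n ≤ 4 * (2 * D) + E.card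
      · obtain ⟨k, hk, k1, k2⟩ := hch m hm (n - 4 * (2 * D)) (by omega) (by omega)
        have := Aux12.add_mem (hIntv (n - k) (by omega) (by omega)) hk
        rwa [Nat.sub_add_cancel (by omega)] at this
      · have := Aux12.add_mem (hIntv (n - E.card) (by omega) (by omega)) hpe
        rwa [Nat.sub_add_cancel (by omega)] at this
  have hle : 4 * (2 * D) + m ≤ 2 * D * (2 * D) + E.card := by nlinarith
  have hinf : sInf (Set.Icc (4 * (2 * D) + m) (2 * D * (2 * D) + E.card)) = 4 * (2 * D) + m :=
    csInf_Icc hle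
  have hsup : sSup (Set.Icc (4 * (2 * D) + m) (2 * D * (2 * D) + E.card)) =
      2 * D * (2 * D) + E.card := csSup_Icc hle
  rw [hL]
  refine ⟨⟨Set.nonempty_Icc.mpr hle, by rw [hinf, hsup]⟩, ?_⟩
  unfold rhoSet
  rw [hinf, hsup]
  have hne : ((4 * (2 * D) + m : ℕ) : ℚ) ≠ 0 := by
    have : 4 * (2 * D) + m ≠ 0 := by omega
    exact_mod_cast this
  rw [div_eq_div_iff hne (by norm_num)]
  have : (2 * D * (2 * D) + E.card) * 2 = D * (4 * (2 * D) + m) := by nlinarith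
  exact_mod_cast this
end

section
/- Let G be a finite abelian group satisfying Property P*: for every nonzero g ∈ G there is a minimal zero-sum sequence A_g of length D(G) with g ∈ supp(A_g). Then there exists A* ∈ B(G) such that every A ∈ B(G) with ρ(L(A)) = D(G)/2 satisfies c(A*A) ≤ 3, and hence L(A*A) is an interval with elasticity D(G)/2. -/
def ZB {G : Type*} [AddCommGroup G] (A : Multiset G) : Set (Multiset (Multiset G)) :=
  {l | (∀ U ∈ l, IsMinZS U) ∧ l.sum = A}

noncomputable def fdistB {G : Type*} [AddCommGroup G]
    (z z' : Multiset (Multiset G)) : ℕ :=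
  letI := Classical.decEq (Multiset G)
  max (z - z ∩ z').card (z' - z ∩ z').card

def CatenaryLE {G : Type*} [AddCommGroup G] (A : Multiset G) (N : ℕ) : Prop :=
  ∀ z ∈ ZB A, ∀ z' ∈ ZB A, ∃ (n : ℕ) (f : ℕ → Multiset (Multiset G)),
    f 0 = z ∧ f n = z' ∧ (∀ i ≤ n, f i ∈ ZB A) ∧
    ∀ i < n, fdistB (f i) (f (i + 1)) ≤ N


namespace ZSProof

section basics
variable {G : Type*} [AddCommGroup G]

/-- The type of atoms. -/
abbrev At (G : Type*) [AddCommGroup G] := {U : Multiset G // IsMinZS U}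

/-- The product (sum of multisets) of a factorization. -/
def pr (z : Multiset (At G)) : Multiset G := (z.map Subtype.val).sum

@[simp] lemma pr_zero : pr (0 : Multiset (At G)) = 0 := rfl
@[simp] lemma pr_cons (U : At G) (z : Multiset (At G)) : pr (U ::ₘ z) = U.1 + pr z := by simp [pr]
@[simp] lemma pr_add (z z' : Multiset (At G)) : pr (z + z') = pr z + pr z' := by simp [pr]
@[simp] lemma pr_singleton (U : At G) : pr {U} = U.1 := by simp [pr]

lemma pr_sum (z : Multiset (At G)) : (pr z).sum = 0 := by
  induction z using Multiset.induction_on with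
  | empty => simp
  | cons U z ih => simp [ih, U.2.2.1]

lemma mem_pr {z : Multiset (At G)} {g : G} (h : g ∈ pr z) : ∃ U ∈ z, g ∈ U.1 := by
  induction z using Multiset.induction_on with
  | empty => simp at h
  | cons U z ih =>
    simp only [pr_cons, Multiset.mem_add] at h
    rcases h with h | h
    · exact ⟨U, by simp, h⟩
    · obtain ⟨V, hV, hg⟩ := ih h
      exact ⟨V, by simp [hV], hg⟩

lemma at_card_pos (U : At G) : 0 < U.1.card := Multiset.card_pos.2 U.2.1

lemma card_le_pr (z : Multiset (At G)) : z.card ≤ (pr z).card := by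
  induction z using Multiset.induction_on with
  | empty => simp
  | cons U z ih =>
    have := at_card_pos U
    simp; omega

lemma isMin_zero : IsMinZS ({0} : Multiset G) := by
  refine ⟨by simp, by simp, fun V hV h0 _ => ?_⟩
  rcases Multiset.le_singleton.1 hV with h | h
  · exact absurd h h0
  · exact h

/-- atom containing zero is `{0}`. -/
lemma eq_zero_of_mem {U : Multiset G} (hU : IsMinZS U) (h : (0 : G) ∈ U) : U = {0} :=
  (hU.2.2 {0} (Multiset.singleton_le.2 h) (by simp) (by simp)).symm

lemma two_le_card {U : Multiset G} (hU : IsMinZS U) (h : (0 : G) ∉ U) : 2 ≤ U.card := by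
  have h1 : 0 < U.card := Multiset.card_pos.2 hU.1
  by_contra hc
  obtain ⟨a, rfl⟩ := Multiset.card_eq_one.1 (show U.card = 1 by omega)
  have := hU.2.1
  simp at this h
  exact h this.symm

lemma two_mul_card_le {z : Multiset (At G)} (h : (0 : G) ∉ pr z) : 2 * z.card ≤ (pr z).card := by
  induction z using Multiset.induction_on with
  | empty => simp
  | cons U z ih =>
    simp only [pr_cons, Multiset.mem_add, not_or] at h
    have := two_le_card U.2 h.1
    have := ih h.2
    simp; omega

lemma exists_fac (A : Multiset G) (hA : A.sum = 0) : ∃ z : Multiset (At G), pr z = A := by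
  induction hn : A.card using Nat.strong_induction_on generalizing A with
  | _ n ih =>
  by_cases h0 : A = 0
  · exact ⟨0, by simp [h0]⟩
  by_cases hm : IsMinZS A
  · exact ⟨{⟨A, hm⟩}, by simp⟩
  · have : ∃ V ≤ A, V ≠ 0 ∧ V.sum = 0 ∧ V ≠ A := by
      by_contra hc
      push Not at hc
      exact hm ⟨h0, hA, fun V h1 h2 h3 => hc V h1 h2 h3⟩
    obtain ⟨V, hV, hV0, hVs, hVA⟩ := this
    obtain ⟨W, rfl⟩ := Multiset.le_iff_exists_add.1 hV
    have hW0 : W ≠ 0 := by rintro rfl; simp at hVA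
    have hWs : W.sum = 0 := by simpa [hVs] using hA
    have c1 := Multiset.card_pos.2 hV0
    have c2 := Multiset.card_pos.2 hW0
    rw [Multiset.card_add] at hn
    obtain ⟨z1, h1⟩ := ih V.card (by omega) V hVs rfl
    obtain ⟨z2, h2⟩ := ih W.card (by omega) W hWs rfl
    exact ⟨z1 + z2, by simp [h1, h2]⟩

/-- zero-sum of at most three nonzero elements is an atom -/
lemma isMin_small {T : Multiset G} (h0 : T ≠ 0) (hs : T.sum = 0) (hz : (0 : G) ∉ T)
    (hc : T.card ≤ 3) : IsMinZS T := by
  have key : ∀ X ≤ T, X.sum = 0 → X.card ≠ 1 := by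
    intro X hX hXs h1
    obtain ⟨a, rfl⟩ := Multiset.card_eq_one.1 h1
    simp at hXs
    subst hXs
    exact hz (Multiset.singleton_le.1 hX)
  refine ⟨h0, hs, fun V hV hV0 hVs => ?_⟩
  obtain ⟨W, rfl⟩ := Multiset.le_iff_exists_add.1 hV
  have hWs : W.sum = 0 := by simpa [hVs] using hs
  have k1 := key V hV hVs
  have k2 := key W (Multiset.le_add_left _ _) hWs
  have c1 := Multiset.card_pos.2 hV0
  rw [Multiset.card_add] at hc
  have : W.card = 0 := by omega
  rw [Multiset.card_eq_zero] at this
  simp [this]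

lemma merge_atom {g h : G} {W : Multiset G} (hU : IsMinZS (g ::ₘ h ::ₘ W)) :
    IsMinZS ((g + h) ::ₘ W) := by
  refine ⟨by simp, by simpa [add_assoc] using hU.2.1, fun X hX hX0 hXs => ?_⟩
  by_cases hm : (g + h) ∈ X
  · obtain ⟨X', rfl⟩ := Multiset.exists_cons_of_mem hm
    have h1 : X' ≤ W := (Multiset.cons_le_cons_iff _).1 hX
    have := hU.2.2 (g ::ₘ h ::ₘ X') (by simpa using h1) (by simp)
      (by simpa [add_assoc] using hXs)
    simp at this
    rw [this]
  · have h1 : X ≤ W := (Multiset.le_cons_of_notMem hm).1 hX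
    have h2 := hU.2.2 X (h1.trans ((Multiset.le_cons_self _ _).trans (Multiset.le_cons_self _ _)))
      hX0 hXs
    have := Multiset.card_le_card h1
    rw [h2] at this
    simp at this

lemma sum_pair_ne {g h : G} {W : Multiset G} (hU : IsMinZS (g ::ₘ h ::ₘ W)) (hW : W ≠ 0) :
    g + h ≠ 0 := by
  intro hs
  have := hU.2.2 (g ::ₘ h ::ₘ 0) (by simp) (by simp) (by simpa using hs)
  simp at this
  exact hW this

lemma card_le_of_zsf (a V : Multiset G) (hV : ∀ X ≤ V, X.sum = 0 → X = 0)
    (y : Multiset (At G)) (hy : pr y ≤ a + V) : y.card ≤ a.card := by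
  induction a using Multiset.induction_on generalizing y with
  | empty =>
    rw [zero_add] at hy
    have h1 := hV _ hy (pr_sum y)
    have := card_le_pr y
    rw [h1] at this
    simpa using this
  | cons g a ih =>
    by_cases hm : g ∈ pr y
    · obtain ⟨U, hUy, hgU⟩ := mem_pr hm
      obtain ⟨y', rfl⟩ := Multiset.exists_cons_of_mem hUy
      obtain ⟨U', hU'⟩ := Multiset.exists_cons_of_mem hgU
      rw [pr_cons, hU', Multiset.cons_add, Multiset.cons_add, Multiset.cons_le_cons_iff] at hy
      have := ih y' ((Multiset.le_add_left _ _).trans hy)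
      simpa using this
    · rw [Multiset.cons_add, Multiset.le_cons_of_notMem hm] at hy
      have := ih y hy
      simp; omega

/-- pair atom -/
def pA (g : G) (hg : g ≠ 0) : At G := ⟨g ::ₘ {-g}, isMin_small (by simp) (by simp)
  (by simpa [eq_comm] using hg) (by simp)⟩

lemma map_nn (V : Multiset G) : (V.map (fun x => -x)).map (fun x => -x) = V := by
  rw [Multiset.map_map]; simp

lemma sum_map_n (V : Multiset G) : (V.map (fun x => -x)).sum = - V.sum := by
  induction V using Multiset.induction_on with
  | empty => simp
  | cons a V ih => rw [Multiset.map_cons, Multiset.sum_cons, Multiset.sum_cons, ih]; abel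

lemma neg_atom {U : Multiset G} (hU : IsMinZS U) : IsMinZS (U.map (fun x => -x)) := by
  refine ⟨?_, by rw [sum_map_n, hU.2.1, neg_zero], fun V hV hV0 hVs => ?_⟩
  · rw [Ne, Multiset.map_eq_zero]; exact hU.1
  have := hU.2.2 (V.map (fun x => -x))
    (by have := Multiset.map_le_map (f := fun x => -x) hV
        rwa [map_nn] at this)
    (by rw [Ne, Multiset.map_eq_zero]; exact hV0) (by rw [sum_map_n, hVs, neg_zero])
  rw [← this, map_nn]

lemma card_atom_le [Fintype G] {U : Multiset G} (hU : IsMinZS U) : U.card ≤ Fintype.card G := by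
  induction U using Quotient.inductionOn with
  | _ l =>
  by_contra hc
  have hlen : Fintype.card G < l.length := by simpa using hc
  obtain ⟨i, j, hij, he⟩ := Fintype.exists_ne_map_eq_of_card_lt
    (fun i : Fin l.length => (l.take i).sum) (by simpa using hlen)
  wlog hlt : i < j generalizing i j
  · exact this j i hij.symm he.symm (lt_of_le_of_ne (not_lt.1 hlt) hij.symm)
  have hlt' : (i : ℕ) < j := hlt
  have e : l.take j = l.take i ++ (l.take j).drop i := by
    conv_lhs => rw [← List.take_append_drop i (l.take j)]
    rw [List.take_take, min_eq_left hlt'.le]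
  have hs : ((l.take j).drop i).sum = 0 := by
    have := congrArg List.sum e
    rw [List.sum_append] at this
    change (l.take i).sum = (l.take j).sum at he
    rw [← he] at this
    simpa using this
  have hl : ((l.take j).drop i).length = j - i := by
    simp
  have hsub : ((l.take j).drop i).Sublist l :=
    (List.drop_sublist _ _).trans (List.take_sublist _ _)
  have := hU.2.2 (((l.take j).drop i : List G) : Multiset G) (by simpa using hsub.subperm)
    (by
      intro h0
      have := congrArg Multiset.card h0
      simp only [Multiset.coe_card, hl, Multiset.card_zero] at this
      omega) (by simpa using hs)
  have := congrArg Multiset.card this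
  simp only [Multiset.coe_card, hl, Multiset.quot_mk_to_coe] at this
  omega

instance finite_At [Fintype G] : Finite (At G) := by
  classical
  refine Finite.of_injective (β := G → Fin (Fintype.card G + 1))
    (fun U g => ⟨U.1.count g, ?_⟩) ?_
  · exact Nat.lt_succ_of_le ((Multiset.count_le_card _ _).trans (card_atom_le U.2))
  · intro U V h
    apply Subtype.ext
    ext g
    have := congrFun h g
    simpa using this

end basics

section grp
variable {G : Type*} [AddCommGroup G] {Γ : Type*} [AddCommGroup Γ]

/-- zero atom -/
def oA : At G := ⟨{0}, isMin_zero⟩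

open Classical in
noncomputable def cl (κ : Multiset (At G) →+ Γ) (A : Multiset G) : Γ :=
  if h : A.sum = 0 then κ (Classical.choose (exists_fac A h)) else 0

noncomputable def tt (κ : Multiset (At G) →+ Γ) (a b : G) : Γ := cl κ (a ::ₘ b ::ₘ {-(a + b)})
noncomputable def pp (κ : Multiset (At G) →+ Γ) (a : G) : Γ := cl κ (a ::ₘ {-a})

def GoodK {Γ : Type*} [AddCommMonoid Γ] (κ : Multiset (At G) →+ Γ) : Prop :=
  ∀ a b : Multiset (At G), a.card ≤ 3 → b.card ≤ 3 → pr a = pr b → κ a = κ b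

variable {κ : Multiset (At G) →+ Γ}

lemma cl_eq (hκ : GoodK κ) {y : Multiset (At G)} {A : Multiset G} (h : pr y = A) (hc : A.card ≤ 3) :
    cl κ A = κ y := by
  have hs : A.sum = 0 := by rw [← h]; exact pr_sum y
  rw [cl, dif_pos hs]
  have := Classical.choose_spec (exists_fac A hs)
  apply hκ
  · exact (card_le_pr _).trans (by rw [this]; exact hc)
  · exact (card_le_pr _).trans (by rw [h]; exact hc)
  · rw [this, h]

lemma pp_eq (hκ : GoodK κ) (a : G) (ha : a ≠ 0) : pp κ a = κ {pA a ha} :=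
  cl_eq hκ (by simp [pA]) (by simp)

lemma tt_eq (hκ : GoodK κ) (a b : G) (ha : a ≠ 0) (hb : b ≠ 0) (hab : a + b ≠ 0) :
    ∃ T : At G, T.1 = a ::ₘ b ::ₘ {-(a + b)} ∧ tt κ a b = κ {T} :=
  ⟨⟨a ::ₘ b ::ₘ {-(a + b)}, isMin_small (by simp) (by simp)
    (by simp only [Multiset.mem_cons, Multiset.mem_singleton, not_or]
        exact ⟨ha.symm, hb.symm, (neg_ne_zero.2 hab).symm⟩) (by simp)⟩, rfl,
    cl_eq hκ (by simp) (by simp)⟩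

lemma pp_zero (hκ : GoodK κ) : pp κ 0 = κ {oA} + κ {oA} := by
  rw [← map_add]
  exact cl_eq hκ (by simp [oA]) (by simp)

lemma tt_zero (hκ : GoodK κ) (a : G) : tt κ a 0 = pp κ a + κ {oA} := by
  obtain ⟨y, hy⟩ := exists_fac (a ::ₘ {-a}) (by simp)
  rw [pp, cl_eq hκ hy (by simp), ← map_add]
  refine cl_eq hκ ?_ (by simp)
  simp [oA, hy]
  exact Multiset.pair_comm _ _

lemma tt_comm (a b : G) : tt κ a b = tt κ b a := by
  rw [tt, tt, Multiset.cons_swap, add_comm]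

lemma tt_rot (a b : G) : tt κ a b = tt κ b (-(a + b)) := by
  rw [tt, tt]
  congr 1
  rw [Multiset.cons_swap]
  congr 1
  have : -(b + -(a + b)) = a := by abel
  rw [this]
  exact Multiset.pair_comm _ _

lemma tt_neg (hκ : GoodK κ) (a : G) : tt κ a (-a) = pp κ a + κ {oA} := by
  rw [tt_comm, tt_rot, neg_add_cancel, neg_zero, tt_zero hκ]

lemma pp_neg (a : G) : pp κ (-a) = pp κ a := by
  rw [pp, pp, neg_neg]
  congr 1
  exact Multiset.pair_comm _ _

lemma key4 (hκ : GoodK κ) (g h k : G) (hg : g ≠ 0) (hh : h ≠ 0) (hk : k ≠ 0) (hl : g + h + k ≠ 0)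
    (y : Multiset (At G)) (hy : pr y = g ::ₘ h ::ₘ k ::ₘ {-(g + h + k)}) :
    tt κ g h + tt κ (g + h) k = pp κ (g + h) + κ y := by
  have hc : 2 * y.card ≤ 4 := by
    have := two_mul_card_le (z := y) (by
      rw [hy]
      simp only [Multiset.mem_cons, Multiset.mem_singleton, not_or]
      exact ⟨hg.symm, hh.symm, hk.symm, (neg_ne_zero.2 hl).symm⟩)
    rw [hy] at this
    simpa using this
  by_cases hgh : g + h = 0
  · obtain rfl : h = -g := (neg_eq_of_add_eq_zero_right hgh).symm
    rw [hgh, tt_neg hκ, tt_comm, tt_zero hκ, pp_zero hκ]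
    have : κ y = pp κ g + pp κ k := by
      rw [pp_eq hκ g hg, pp_eq hκ k hk, ← map_add]
      apply hκ _ _ (by omega) (by simp)
      rw [hy]
      simp only [pr_add, pr_singleton, pA, hgh, zero_add]
      simp only [← Multiset.singleton_add]
      abel
    rw [this]; abel
  · obtain ⟨T1, h1, e1⟩ := tt_eq hκ g h hg hh hgh
    obtain ⟨T2, h2, e2⟩ := tt_eq hκ (g + h) k hgh hk hl
    rw [e1, e2, pp_eq hκ _ hgh, ← map_add, ← map_add]
    apply hκ _ _ (by simp) (by simp; omega)
    simp only [pr_add, pr_singleton, h1, h2, hy, pA]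
    simp only [← Multiset.singleton_add]
    abel

lemma cocyc (hκ : GoodK κ) (g h k : G) : tt κ g h + tt κ (g + h) k + pp κ (g + k)
    = tt κ g k + tt κ (g + k) h + pp κ (g + h) := by
  by_cases hg : g = 0
  · subst hg
    simp only [zero_add]
    rw [tt_comm 0 h, tt_comm 0 k, tt_zero hκ, tt_zero hκ, tt_comm h k]; abel
  by_cases hh : h = 0
  · subst hh
    simp only [add_zero]
    rw [tt_zero hκ, tt_zero hκ]; abel
  by_cases hk : k = 0
  · subst hk
    simp only [add_zero]
    rw [tt_zero hκ, tt_zero hκ]; abel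
  by_cases hl : g + h + k = 0
  · obtain rfl : k = -(g + h) := (neg_eq_of_add_eq_zero_right hl).symm
    have e : g + -(g + h) = -h := by abel
    rw [e, tt_neg hκ, pp_neg, tt_comm (-h) h, tt_neg hκ, tt_comm g h, tt_rot h g, add_comm h g]
    abel
  obtain ⟨y, hy⟩ := exists_fac (g ::ₘ h ::ₘ k ::ₘ {-(g + h + k)}) (by simp [add_assoc])
  rw [key4 hκ g h k hg hh hk hl y hy]
  have e : g + k + h = g + h + k := by abel
  rw [key4 hκ g k h hg hk hh (by rwa [e]) y (by rw [e, hy]; congr 1; exact Multiset.cons_swap _ _ _)]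
  abel

/-- state step -/
noncomputable def stp (κ : Multiset (At G) →+ Γ) (x : Γ × G) (h : G) : Γ × G :=
  (x.1 + (tt κ x.2 h - pp κ (x.2 + h)), x.2 + h)

lemma stp_comm (hκ : GoodK κ) : RightCommutative (stp κ) := by
  refine ⟨fun x h k => ?_⟩
  obtain ⟨q, g⟩ := x
  have e : g + h + k = g + k + h := by abel
  simp only [stp, Prod.mk.injEq]
  refine ⟨?_, e⟩
  have := cocyc hκ g h k
  rw [e]
  have h2 : tt κ g h + tt κ (g + h) k - pp κ (g + h) = tt κ g k + tt κ (g + k) h - pp κ (g + k) := by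
    rw [sub_eq_sub_iff_add_eq_add, this]
  calc _ = q + (tt κ g h + tt κ (g + h) k - pp κ (g + h)) - pp κ (g + k + h) := by abel
    _ = _ := by rw [h2]; abel

lemma foldl_sing [RightCommutative (stp κ)] (x : Γ × G) (h : G) :
    Multiset.foldl (stp κ) x {h} = stp κ x h := by
  rw [← Multiset.cons_zero, Multiset.foldl_cons, Multiset.foldl_zero]

lemma fold_atom (hκ : GoodK κ) [RightCommutative (stp κ)] (n : ℕ) : ∀ (q : Γ) (g : G) (W : Multiset G) (hU : IsMinZS (g ::ₘ W)),
    W.card = n + 1 → Multiset.foldl (stp κ) (q, g) W = (q + κ {⟨g ::ₘ W, hU⟩} - κ {oA}, 0) := by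
  induction n with
  | zero =>
    intro q g W hU hc
    obtain ⟨b, rfl⟩ := Multiset.card_eq_one.1 hc
    obtain rfl : b = -g := by
      have := hU.2.1
      simp at this
      exact (neg_eq_of_add_eq_zero_right this).symm
    have hg : g ≠ 0 := by
      rintro rfl
      have := eq_zero_of_mem hU (by simp)
      simpa using congrArg Multiset.card this
    rw [foldl_sing]
    simp only [stp, add_neg_cancel, Prod.mk.injEq, and_true]
    rw [tt_neg hκ, pp_zero hκ, pp_eq hκ g hg]
    have : (⟨g ::ₘ {-g}, hU⟩ : At G) = pA g hg := rfl
    rw [this]; abel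
  | succ n ih =>
    intro q g W hU hc
    obtain ⟨h, hW⟩ := Multiset.card_pos_iff_exists_mem.1 (show 0 < W.card by omega)
    obtain ⟨W, rfl⟩ := Multiset.exists_cons_of_mem hW
    have hc' : W.card = n + 1 := by simpa using hc
    have hW0 : W ≠ 0 := by rintro rfl; simp at hc'
    have hs := sum_pair_ne hU hW0
    have hnz : (0 : G) ∉ g ::ₘ h ::ₘ W := by
      intro h0
      have := congrArg Multiset.card (eq_zero_of_mem hU h0)
      simp at this
    simp only [Multiset.mem_cons, not_or] at hnz
    rw [Multiset.foldl_cons]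
    simp only [stp]
    rw [ih _ _ _ (merge_atom hU) hc']
    simp only [Prod.mk.injEq, and_true]
    obtain ⟨T, hT, eT⟩ := tt_eq hκ g h (fun h => hnz.1 h.symm) (fun h => hnz.2.1 h.symm) hs
    rw [eT, pp_eq hκ _ hs]
    have : κ {T} + κ {⟨(g + h) ::ₘ W, merge_atom hU⟩}
        = κ {pA (g + h) hs} + κ {⟨g ::ₘ h ::ₘ W, hU⟩} := by
      rw [← map_add, ← map_add]
      apply hκ _ _ (by simp) (by simp)
      simp only [pr_add, pr_singleton, hT, pA]
      simp only [← Multiset.singleton_add]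
      abel
    calc _ = q + (κ {T} + κ {⟨(g + h) ::ₘ W, merge_atom hU⟩}) - κ {pA (g + h) hs} - κ {oA} := by
          abel
      _ = _ := by rw [this]; abel

lemma fold_at (hκ : GoodK κ) [RightCommutative (stp κ)] (q : Γ) (U : At G) :
    Multiset.foldl (stp κ) (q, 0) U.1 = (q + κ {U}, 0) := by
  obtain ⟨U, hU⟩ := U
  by_cases h0 : (0 : G) ∈ U
  · obtain rfl := eq_zero_of_mem hU h0
    rw [foldl_sing]
    simp only [stp, add_zero, Prod.mk.injEq, and_true]
    rw [tt_zero hκ]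
    have : (⟨{0}, hU⟩ : At G) = oA := rfl
    rw [this]; abel
  · have hc := two_le_card hU h0
    obtain ⟨g, hg⟩ := Multiset.card_pos_iff_exists_mem.1 (show 0 < U.card by omega)
    obtain ⟨W, rfl⟩ := Multiset.exists_cons_of_mem hg
    rw [Multiset.foldl_cons]
    simp only [stp, zero_add]
    rw [fold_atom hκ (W.card - 1) _ _ _ hU (by simp at hc; omega)]
    rw [tt_comm, tt_zero hκ]
    simp only [Prod.mk.injEq, and_true]
    abel

lemma fold_pr (hκ : GoodK κ) [RightCommutative (stp κ)] (q : Γ) (y : Multiset (At G)) :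
    Multiset.foldl (stp κ) (q, 0) (pr y) = (q + κ y, 0) := by
  induction y using Multiset.induction_on generalizing q with
  | empty => simp
  | cons U y ih =>
    rw [pr_cons, Multiset.foldl_add, fold_at hκ, ih, ← Multiset.singleton_add, map_add, add_assoc]

theorem kappa_eq (hκ : GoodK κ) (y y' : Multiset (At G)) (h : pr y = pr y') : κ y = κ y' := by
  have := stp_comm hκ
  have h1 := fold_pr hκ 0 y
  rw [h, fold_pr hκ 0 y'] at h1
  simpa using h1.symm

end grp

section extract
variable {G : Type*} [AddCommGroup G] [Fintype G] [DecidableEq G] {M : Type*} [AddCommMonoid M]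
variable {π : Multiset (At G) →+ M}

set_option linter.unusedSectionVars false in
lemma map_cons_eq (hπ : GoodK π) (U : At G) (y : Multiset (At G)) : π (U ::ₘ y) = π {U} + π y := by
  rw [← Multiset.singleton_add, map_add]

lemma pull_pair_aux (hπ : GoodK π) (g : G) (hg : g ≠ 0) (n : ℕ) : ∀ (y : Multiset (At G)) (U : At G),
    (∀ s : G, s ≠ 0 → Fintype.card G < (pr (U ::ₘ y)).count s) → g ∈ U.1 → U.1.card = n + 2 →
    ∃ y', pr (U ::ₘ y) = pr (pA g hg ::ₘ y') ∧ π (U ::ₘ y) = π (pA g hg ::ₘ y') := by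
  induction n with
  | zero =>
    intro y U hy hgU hc
    refine ⟨y, ?_⟩
    have : U = pA g hg := by
      apply Subtype.ext
      obtain ⟨W, hW⟩ := Multiset.exists_cons_of_mem hgU
      rw [hW] at hc
      have hc' : W.card = 1 := by simpa using hc
      obtain ⟨b, rfl⟩ := Multiset.card_eq_one.1 hc'
      have hs := U.2.2.1
      rw [hW] at hs
      simp at hs
      rw [hW, (neg_eq_of_add_eq_zero_right hs).symm]
      rfl
    rw [this]; exact ⟨rfl, rfl⟩
  | succ n ih =>
    intro y U hy hgU hc
    obtain ⟨U, hU⟩ := U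
    obtain ⟨W, rfl⟩ := Multiset.exists_cons_of_mem hgU
    have hc1 : W.card = n + 2 := by simpa using hc
    obtain ⟨h, hh⟩ := Multiset.card_pos_iff_exists_mem.1 (show 0 < W.card by omega)
    obtain ⟨W, rfl⟩ := Multiset.exists_cons_of_mem hh
    have hc2 : W.card = n + 1 := by simpa using hc1
    obtain ⟨k, hk⟩ := Multiset.card_pos_iff_exists_mem.1 (show 0 < W.card by omega)
    obtain ⟨W, rfl⟩ := Multiset.exists_cons_of_mem hk
    have hc3 : W.card = n := by simpa using hc2
    have eU : g ::ₘ h ::ₘ k ::ₘ W = h ::ₘ k ::ₘ g ::ₘ W := by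
      rw [Multiset.cons_swap g h, Multiset.cons_swap g k]
    have hU' : IsMinZS (h ::ₘ k ::ₘ g ::ₘ W) := by rwa [← eU]
    have hs : h + k ≠ 0 := sum_pair_ne hU' (by simp)
    have hm : h + k ∈ pr y := by
      have h1 := hy _ hs
      have h2 := Multiset.count_le_card (h + k) (g ::ₘ h ::ₘ k ::ₘ W)
      have h3 := card_atom_le hU
      simp only [pr_cons, Multiset.count_add] at h1
      exact Multiset.count_pos.1 (by omega)
    obtain ⟨V, hV, hsV⟩ := mem_pr hm
    obtain ⟨y, rfl⟩ := Multiset.exists_cons_of_mem hV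
    obtain ⟨V', hV'⟩ := Multiset.exists_cons_of_mem hsV
    have hVs := V.2.2.1
    rw [hV'] at hVs
    obtain ⟨x, hx⟩ := exists_fac (h ::ₘ k ::ₘ V') (by simpa [add_assoc] using hVs)
    have hxc : x.card ≤ 2 := by
      have := card_le_of_zsf (h ::ₘ {k}) V' (by
        intro X hX hXs
        by_contra hX0
        have h1 := V.2.2.2 X (by rw [hV']; exact hX.trans (Multiset.le_cons_self _ _)) hX0 hXs
        have h2 := Multiset.card_le_card hX
        rw [h1, hV'] at h2
        simp at h2) x (by rw [hx]; simp)
      simpa using this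
    let U1 : At G := ⟨(h + k) ::ₘ g ::ₘ W, merge_atom hU'⟩
    have hpr : pr (⟨g ::ₘ h ::ₘ k ::ₘ W, hU⟩ ::ₘ V ::ₘ 0) = pr (U1 ::ₘ x) := by
      simp only [pr_cons, hV', hx, U1, pr_zero]
      simp only [← Multiset.singleton_add]
      abel
    have hpr2 : pr (⟨g ::ₘ h ::ₘ k ::ₘ W, hU⟩ ::ₘ V ::ₘ y) = pr (U1 ::ₘ (x + y)) := by
      simp only [pr_cons, pr_add, pr_zero, add_zero] at hpr ⊢
      rw [← add_assoc, hpr, add_assoc]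
    have hpi : π (⟨g ::ₘ h ::ₘ k ::ₘ W, hU⟩ ::ₘ V ::ₘ y) = π (U1 ::ₘ (x + y)) := by
      have := hπ (⟨g ::ₘ h ::ₘ k ::ₘ W, hU⟩ ::ₘ V ::ₘ 0) (U1 ::ₘ x) (by simp)
        (by simp; omega) hpr
      calc _ = π (⟨g ::ₘ h ::ₘ k ::ₘ W, hU⟩ ::ₘ V ::ₘ 0) + π y := by rw [← map_add]; simp
        _ = _ := by rw [this, ← map_add]; simp
    rw [hpr2] at hy
    obtain ⟨y', h1, h2⟩ := ih (x + y) U1 hy (by simp [U1]) (by simp [U1]; omega)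
    exact ⟨y', hpr2.trans h1, hpi.trans h2⟩

lemma pull_pair (hπ : GoodK π) (g : G) (hg : g ≠ 0) (y : Multiset (At G))
    (hy : ∀ s : G, s ≠ 0 → Fintype.card G < (pr y).count s) :
    ∃ y', pr y = pr (pA g hg ::ₘ y') ∧ π y = π (pA g hg ::ₘ y') := by
  obtain ⟨U, hU, hgU⟩ := mem_pr (Multiset.count_pos.1 ((Nat.zero_le _).trans_lt (hy g hg)))
  obtain ⟨y, rfl⟩ := Multiset.exists_cons_of_mem hU
  have h2 := two_le_card U.2 (by
    intro h0
    have := eq_zero_of_mem U.2 h0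
    rw [this] at hgU
    simp at hgU
    exact hg hgU)
  exact pull_pair_aux hπ g hg (U.1.card - 2) y U hy hgU (by omega)

lemma pull_triple (hπ : GoodK π) (T : At G) (hT : T.1.card = 3) (y : Multiset (At G))
    (hy : ∀ s : G, s ≠ 0 → Fintype.card G + 6 < (pr y).count s) :
    ∃ y', pr y = pr (T ::ₘ y') ∧ π y = π (T ::ₘ y') := by
  obtain ⟨a, b, c, habc⟩ := Multiset.card_eq_three.1 hT
  have hnz : (0 : G) ∉ T.1 := by
    intro h0
    have := congrArg Multiset.card (eq_zero_of_mem T.2 h0)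
    rw [hT] at this
    simp at this
  have hnz' := hnz
  rw [habc] at hnz'
  simp only [Multiset.insert_eq_cons, Multiset.mem_cons, Multiset.mem_singleton, not_or] at hnz'
  have ha : a ≠ 0 := fun h => hnz'.1 h.symm
  have hb : b ≠ 0 := fun h => hnz'.2.1 h.symm
  have hc : c ≠ 0 := fun h => hnz'.2.2 h.symm
  have cnt : ∀ (s g : G) (hg : g ≠ 0), (pA g hg).1.count s ≤ 2 := fun s g hg =>
    (Multiset.count_le_card _ _).trans (by simp [pA])
  obtain ⟨y1, p1, q1⟩ := pull_pair hπ a ha y (fun s hs => by have := hy s hs; omega)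
  obtain ⟨y2, p2, q2⟩ := pull_pair hπ b hb y1 (fun s hs => by
    have h1 := hy s hs
    have := cnt s a ha
    rw [p1, pr_cons, Multiset.count_add] at h1
    omega)
  obtain ⟨y3, p3, q3⟩ := pull_pair hπ c hc y2 (fun s hs => by
    have h1 := hy s hs
    have := cnt s a ha
    have := cnt s b hb
    rw [p1, pr_cons, p2, pr_cons, Multiset.count_add, Multiset.count_add] at h1
    omega)
  have hpr : pr (pA a ha ::ₘ pA b hb ::ₘ pA c hc ::ₘ 0) = pr (T ::ₘ ⟨_, neg_atom T.2⟩ ::ₘ 0) := by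
    simp only [pr_cons, habc, pA, pr_zero, Multiset.insert_eq_cons, Multiset.map_cons,
      Multiset.map_singleton]
    simp only [← Multiset.singleton_add]
    abel
  have hpi := hπ _ _ (by simp) (by simp) hpr
  refine ⟨⟨_, neg_atom T.2⟩ ::ₘ y3, ?_, ?_⟩
  · simp only [pr_cons, pr_zero, add_zero] at hpr ⊢
    rw [p1, pr_cons, p2, pr_cons, p3, pr_cons, ← add_assoc T.1, ← hpr]
    abel
  · rw [q1, map_cons_eq hπ, q2, map_cons_eq hπ, q3, map_cons_eq hπ, map_cons_eq hπ,
      map_cons_eq hπ ⟨_, neg_atom T.2⟩]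
    simp only [map_cons_eq hπ, map_zero, add_zero] at hpi
    rw [← add_assoc (π {T}), ← hpi]
    abel

lemma pull_atom_aux (hπ : GoodK π) (n : ℕ) : ∀ (U : At G), U.1.card = n + 2 → ∀ (y : Multiset (At G)),
    (∀ s : G, s ≠ 0 → 2 * Fintype.card G + 6 < (pr y).count s) →
    ∃ y', pr y = pr (U ::ₘ y') ∧ π y = π (U ::ₘ y') := by
  induction n with
  | zero =>
    intro U hc y hy
    obtain ⟨a, b, hab⟩ := Multiset.card_eq_two.1 hc
    have hs := U.2.2.1
    rw [hab] at hs
    simp at hs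
    have hb := (neg_eq_of_add_eq_zero_right hs).symm
    have ha : a ≠ 0 := by
      rintro rfl
      have := congrArg Multiset.card (eq_zero_of_mem U.2 (by rw [hab]; simp))
      rw [hc] at this
      simp at this
    have : U = pA a ha := by
      apply Subtype.ext
      rw [hab, hb]; rfl
    rw [this]
    exact pull_pair hπ a ha y (fun s hs => by have := hy s hs; omega)
  | succ n ih =>
    intro U hc y hy
    by_cases hn : n = 0
    · subst hn
      exact pull_triple hπ U hc y (fun s hs => by have := hy s hs; omega)
    obtain ⟨U, hU⟩ := U
    have hnz : (0 : G) ∉ U := by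
      intro h0
      have := congrArg Multiset.card (eq_zero_of_mem hU h0)
      simp at hc this
      omega
    obtain ⟨g, hg⟩ := Multiset.card_pos_iff_exists_mem.1 (show 0 < U.card by simp at hc; omega)
    obtain ⟨W, rfl⟩ := Multiset.exists_cons_of_mem hg
    have hc1 : W.card = n + 2 := by simpa using hc
    obtain ⟨h, hh⟩ := Multiset.card_pos_iff_exists_mem.1 (show 0 < W.card by omega)
    obtain ⟨W, rfl⟩ := Multiset.exists_cons_of_mem hh
    have hc2 : W.card = n + 1 := by simpa using hc1
    have hW0 : W ≠ 0 := by rintro rfl; simp at hc2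
    have hs := sum_pair_ne hU hW0
    simp only [Multiset.mem_cons, not_or] at hnz
    let U1 : At G := ⟨(g + h) ::ₘ W, merge_atom hU⟩
    obtain ⟨y1, p1, q1⟩ := ih U1 (by simp [U1]; omega) y hy
    let T : At G := ⟨g ::ₘ h ::ₘ {-(g + h)}, isMin_small (by simp) (by simp)
      (by simp only [Multiset.mem_cons, Multiset.mem_singleton, not_or]
          exact ⟨hnz.1, hnz.2.1, (neg_ne_zero.2 hs).symm⟩) (by simp)⟩
    obtain ⟨y2, p2, q2⟩ := pull_triple hπ T (by simp [T]) y1 (fun s hs => by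
      have h1 := hy s hs
      have h2 := (Multiset.count_le_card s U1.1).trans (card_atom_le U1.2)
      rw [p1, pr_cons, Multiset.count_add] at h1
      omega)
    have hpr : pr (U1 ::ₘ T ::ₘ 0) = pr (⟨g ::ₘ h ::ₘ W, hU⟩ ::ₘ pA (g + h) hs ::ₘ 0) := by
      simp only [pr_cons, U1, T, pA, pr_zero]
      simp only [← Multiset.singleton_add]
      abel
    have hpi := hπ _ _ (by simp) (by simp) hpr
    refine ⟨pA (g + h) hs ::ₘ y2, ?_, ?_⟩
    · rw [p1, pr_cons, p2]
      simp only [pr_cons, pr_zero, add_zero] at hpr ⊢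
      rw [← add_assoc, hpr, add_assoc]
    · rw [q1, map_cons_eq hπ, q2]
      simp only [map_cons_eq hπ _ (_ ::ₘ _), map_cons_eq hπ _ y2, map_cons_eq hπ _ 0, map_zero,
        add_zero] at hpi ⊢
      rw [← add_assoc, hpi, add_assoc]

lemma pull_all (hπ : GoodK π) (w : Multiset (At G)) (hw : (0 : G) ∉ pr w) : ∀ (y : Multiset (At G)),
    (∀ s : G, s ≠ 0 → 2 * Fintype.card G + 6 + (pr w).card < (pr y).count s) →
    ∃ y', pr y = pr (w + y') ∧ π y = π (w + y') := by
  induction w using Multiset.induction_on with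
  | empty => intro y _; exact ⟨y, by simp⟩
  | cons U w ih =>
    intro y hy
    simp only [pr_cons, Multiset.mem_add, not_or] at hw
    have h2 := two_le_card U.2 hw.1
    obtain ⟨y1, p1, q1⟩ := pull_atom_aux hπ (U.1.card - 2) U (by omega) y
      (fun s hs => by have := hy s hs; omega)
    obtain ⟨y2, p2, q2⟩ := ih hw.2 y1 (fun s hs => by
      have h1 := hy s hs
      have h2 := (Multiset.count_le_card s U.1)
      rw [p1, pr_cons, pr_cons, Multiset.count_add, Multiset.card_add] at h1
      omega)
    refine ⟨y2, ?_, ?_⟩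
    · rw [p1, Multiset.cons_add, pr_cons, pr_cons, p2]
    · rw [q1, Multiset.cons_add, map_cons_eq hπ, q2, ← map_cons_eq hπ]

end extract

section noeth

lemma noeth (M : Type*) [AddCommMonoid M] [AddMonoid.FG M] :
    ∃ w0 : M, ∀ w a b : M, w + a = w + b → w0 + a = w0 + b := by
  classical
  let s : M → AddMonoidAlgebra ℤ M := fun w => AddMonoidAlgebra.single w 1
  have smul : ∀ w w', s w * s w' = s (w + w') := fun w w' => by
    simp [s, AddMonoidAlgebra.single_mul_single]
  have sinj : Function.Injective s := by
    intro a b h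
    exact AddMonoidAlgebra.single_left_injective (one_ne_zero) h
  let I : Ideal (AddMonoidAlgebra ℤ M) :=
    { carrier := {x | ∃ w, s w * x = 0}
      zero_mem' := ⟨0, by simp⟩
      add_mem' := by
        rintro x y ⟨w, hw⟩ ⟨v, hv⟩
        refine ⟨w + v, ?_⟩
        rw [← smul, mul_add]
        have e1 : s w * s v * x = s v * (s w * x) := by ring
        have e2 : s w * s v * y = s w * (s v * y) := by ring
        rw [e1, e2, hw, hv]; simp
      smul_mem' := by
        rintro c x ⟨w, hw⟩
        refine ⟨w, ?_⟩
        have e : s w * (c • x) = c * (s w * x) := by rw [smul_eq_mul]; ring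
        rw [e, hw, mul_zero] }
  have : IsNoetherianRing (AddMonoidAlgebra ℤ M) := Algebra.FiniteType.isNoetherianRing ℤ _
  obtain ⟨S, hS⟩ := (isNoetherianRing_iff_ideal_fg _).1 this I
  have common : ∀ T : Finset (AddMonoidAlgebra ℤ M), (∀ x ∈ T, x ∈ I) →
      ∃ w, ∀ x ∈ T, s w * x = 0 := by
    intro T
    induction T using Finset.induction_on with
    | empty => intro _; exact ⟨0, by simp⟩
    | insert x T hx ih =>
      intro hT
      obtain ⟨w, hw⟩ := ih (fun y hy => hT y (Finset.mem_insert_of_mem hy))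
      obtain ⟨v, hv⟩ := hT x (Finset.mem_insert_self _ _)
      refine ⟨v + w, fun y hy => ?_⟩
      rw [← smul]
      rcases Finset.mem_insert.1 hy with rfl | hy
      · rw [mul_right_comm, hv, zero_mul]
      · rw [mul_assoc, hw y hy, mul_zero]
  obtain ⟨w0, hw0⟩ := common S (fun x hx => by rw [← hS]; exact Ideal.subset_span hx)
  refine ⟨w0, fun w a b h => ?_⟩
  have hI : s a - s b ∈ I := ⟨w, by rw [mul_sub, smul, smul, h, sub_self]⟩
  have key : ∀ x ∈ I, s w0 * x = 0 := by
    intro x hx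
    rw [← hS] at hx
    refine Submodule.span_induction (p := fun x _ => s w0 * x = 0) (fun x hx => hw0 x hx) (by simp)
      (fun x y _ _ h1 h2 => by rw [mul_add, h1, h2, add_zero])
      (fun c x _ h1 => by rw [smul_eq_mul, mul_left_comm, h1, mul_zero]) hx
  have := key _ hI
  rw [mul_sub, smul, smul, sub_eq_zero] at this
  exact sinj this

end noeth

section monoid
variable {G : Type*} [AddCommGroup G]

def rel (a b : Multiset (At G)) : Prop := a.card ≤ 3 ∧ b.card ≤ 3 ∧ pr a = pr b

def cC (G : Type*) [AddCommGroup G] : AddCon (Multiset (At G)) := addConGen rel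

abbrev MM (G : Type*) [AddCommGroup G] := (cC G).Quotient

def piM (G : Type*) [AddCommGroup G] : Multiset (At G) →+ MM G := (cC G).mk'

lemma piM_eq {a b : Multiset (At G)} : piM G a = piM G b ↔ cC G a b := (cC G).eq

lemma piM_surj : Function.Surjective (piM G) := (cC G).mk'_surjective

lemma good_piM : GoodK (piM G) := fun a b h1 h2 h3 =>
  piM_eq.2 (AddConGen.Rel.of _ _ ⟨h1, h2, h3⟩)

lemma fg_MM [Fintype G] : AddMonoid.FG (MM G) := by
  have : AddMonoid.FG (Multiset (At G)) := by
    rw [AddMonoid.fg_iff]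
    refine ⟨Set.range (fun U => ({U} : Multiset (At G))), ?_, Set.finite_range _⟩
    rw [eq_top_iff]
    intro z _
    induction z using Multiset.induction_on with
    | empty => exact zero_mem _
    | cons U z ih =>
      rw [← Multiset.singleton_add]
      exact add_mem (AddSubmonoid.subset_closure ⟨U, rfl⟩) (ih trivial)
  exact AddMonoid.fg_of_surjective (piM G) piM_surj

open Classical in
lemma pr_filter (z : Multiset (At G)) :
    pr (z.filter (fun U => U ≠ oA)) = (pr z).filter (fun g => g ≠ 0) := by
  induction z using Multiset.induction_on with
  | empty => simp
  | cons U z ih =>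
    rw [pr_cons, Multiset.filter_add]
    by_cases h : U = oA
    · rw [Multiset.filter_cons_of_neg _ (by simpa using h), ih, h]
      simp [oA]
    · rw [Multiset.filter_cons_of_pos (p := fun U => U ≠ oA) _ h, pr_cons, ih]
      congr 1
      symm
      rw [Multiset.filter_eq_self]
      rintro a ha rfl
      exact h (Subtype.ext (eq_zero_of_mem U.2 ha))

open Classical in
lemma pr_count (z : Multiset (At G)) : z.count oA = (pr z).count 0 := by
  induction z using Multiset.induction_on with
  | empty => simp
  | cons U z ih =>
    rw [pr_cons, Multiset.count_add, Multiset.count_cons, ih]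
    by_cases h : U = oA
    · simp [h, oA, add_comm]
    · have h0 : (0 : G) ∉ U.1 := fun ha => h (Subtype.ext (eq_zero_of_mem U.2 ha))
      rw [if_neg (fun h' => h h'.symm), Multiset.count_eq_zero_of_notMem h0, add_comm]

open Classical in
lemma pi_split (z : Multiset (At G)) : piM G z =
    piM G (z.filter (fun U => U ≠ oA)) + (pr z).count 0 • piM G {oA} := by
  rw [← pr_count, ← map_nsmul, ← map_add]
  congr 1
  conv_lhs => rw [← Multiset.filter_add_not (fun U => U ≠ oA) z]
  congr 1
  simp only [ne_eq, not_not]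
  rw [Multiset.filter_eq' z oA, Multiset.nsmul_singleton]

open Classical in
lemma pi_filter {a b : Multiset (At G)} (h : piM G a = piM G b) :
    piM G (a.filter (fun U => U ≠ oA)) = piM G (b.filter (fun U => U ≠ oA)) := by
  rw [piM_eq] at h
  change AddConGen.Rel rel a b at h
  induction h with
  | of x y hxy =>
    refine good_piM _ _ ?_ ?_ ?_
    · exact (Multiset.card_le_card (Multiset.filter_le _ _)).trans hxy.1
    · exact (Multiset.card_le_card (Multiset.filter_le _ _)).trans hxy.2.1
    · rw [pr_filter, pr_filter, hxy.2.2]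
  | refl => rfl
  | symm _ ih => exact ih.symm
  | trans _ _ h1 h2 => exact h1.trans h2
  | add _ _ h1 h2 => simp only [Multiset.filter_add, map_add, h1, h2]

open Classical in
theorem connect (G : Type*) [AddCommGroup G] [Fintype G] :
    ∃ K : ℕ, ∀ z z' : Multiset (At G), pr z = pr z' →
      (∀ s : G, s ≠ 0 → K < (pr z).count s) → piM G z = piM G z' := by
  have := fg_MM (G := G)
  obtain ⟨w0, hw0⟩ := noeth (MM G)
  obtain ⟨w, rfl⟩ := piM_surj w0
  let w' := w.filter (fun U => U ≠ oA)
  have hw' : (0 : G) ∉ pr w' := by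
    simp only [w', pr_filter]
    simp
  refine ⟨2 * Fintype.card G + 6 + (pr w').card, fun z z' hzz hz => ?_⟩
  obtain ⟨y, p, q⟩ := pull_all good_piM w' hw' z hz
  obtain ⟨y', p', q'⟩ := pull_all good_piM w' hw' z' (by rwa [← hzz])
  have hy : pr y = pr y' := by
    rw [hzz, p', pr_add, pr_add] at p
    exact (add_left_cancel p).symm
  let κ : Multiset (At G) →+ Algebra.GrothendieckAddGroup (MM G) :=
    (Algebra.GrothendieckAddGroup.of).comp (piM G)
  have hκ : GoodK κ := fun a b h1 h2 h3 => by
    simp only [κ, AddMonoidHom.comp_apply]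
    rw [good_piM a b h1 h2 h3]
  have h1 := kappa_eq hκ y y' hy
  obtain ⟨c, hc⟩ := (AddLocalization.addMonoidOf (⊤ : AddSubmonoid (MM G))).eq_iff_exists.1 h1
  have h2 := hw0 _ _ _ hc
  rw [← map_add, ← map_add] at h2
  have h3 := pi_filter h2
  rw [Multiset.filter_add, Multiset.filter_add, map_add, map_add] at h3
  rw [q, q', map_add, map_add, pi_split y, pi_split y', hy, ← add_assoc, ← add_assoc, h3]

/-- elementary step -/
def Step (z z' : Multiset (At G)) : Prop :=
  ∃ c a b, z = c + a ∧ z' = c + b ∧ rel a b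

lemma step_symm {z z' : Multiset (At G)} (h : Step z z') : Step z' z := by
  obtain ⟨c, a, b, h1, h2, h3, h4, h5⟩ := h
  exact ⟨c, b, a, h2, h1, h4, h3, h5.symm⟩

lemma step_add {z z' : Multiset (At G)} (x : Multiset (At G)) (h : Step z z') :
    Step (x + z) (x + z') := by
  obtain ⟨c, a, b, rfl, rfl, h3⟩ := h
  exact ⟨x + c, a, b, by rw [add_assoc], by rw [add_assoc], h3⟩

lemma chain_add {z z' : Multiset (At G)} (x : Multiset (At G))
    (h : Relation.ReflTransGen Step z z') : Relation.ReflTransGen Step (x + z) (x + z') := by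
  induction h with
  | refl => exact Relation.ReflTransGen.refl
  | tail _ h1 ih => exact ih.tail (step_add x h1)

lemma chain_symm {z z' : Multiset (At G)}
    (h : Relation.ReflTransGen Step z z') : Relation.ReflTransGen Step z' z := by
  induction h with
  | refl => exact Relation.ReflTransGen.refl
  | tail _ h1 ih => exact ih.head (step_symm h1)

lemma chain_of_pi {z z' : Multiset (At G)} (h : piM G z = piM G z') :
    Relation.ReflTransGen Step z z' := by
  rw [piM_eq] at h
  change AddConGen.Rel rel z z' at h
  induction h with
  | of x y hxy => exact Relation.ReflTransGen.single ⟨0, x, y, by simp, by simp, hxy⟩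
  | refl => exact Relation.ReflTransGen.refl
  | symm _ ih => exact chain_symm ih
  | trans _ _ h1 h2 => exact h1.trans h2
  | @add w x y z _ _ h1 h2 =>
    have e1 := chain_add w h2
    have e2 := chain_add z h1
    rw [add_comm z, add_comm z] at e2
    exact e1.trans e2

end monoid

section final
variable {G : Type*} [AddCommGroup G]

lemma step_pr {z z' : Multiset (At G)} (h : Step z z') : pr z = pr z' := by
  obtain ⟨c, a, b, rfl, rfl, h3⟩ := h
  simp [h3.2.2]

lemma pr_eq_zero {z : Multiset (At G)} (h : pr z = 0) : z = 0 := by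
  have := card_le_pr z
  rw [h] at this
  simpa using this

lemma rel_card {a b : Multiset (At G)} (h : rel a b) : b.card ≤ a.card + 1 := by
  obtain ⟨h1, h2, h3⟩ := h
  by_cases c0 : a.card = 0
  · rw [Multiset.card_eq_zero] at c0
    subst c0
    rw [pr_eq_zero (h3.symm.trans pr_zero)]
    simp
  by_cases c1 : a.card = 1
  · obtain ⟨U, rfl⟩ := Multiset.card_eq_one.1 c1
    rcases Multiset.empty_or_exists_mem b with rfl | ⟨V, hV⟩
    · simp
    · obtain ⟨b, rfl⟩ := Multiset.exists_cons_of_mem hV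
      rw [pr_singleton, pr_cons] at h3
      have e := U.2.2.2 V.1 (by rw [h3]; exact Multiset.le_add_right _ _) V.2.1 V.2.2.1
      rw [e] at h3
      have : pr b = 0 := by simpa using h3
      rw [pr_eq_zero this]
      simp
  omega

lemma step_card {z z' : Multiset (At G)} (h : Step z z') : z'.card ≤ z.card + 1 := by
  obtain ⟨c, a, b, rfl, rfl, h3⟩ := h
  have := rel_card h3
  simp; omega

lemma ivt {z z' : Multiset (At G)} (h : Relation.ReflTransGen Step z z') (k : ℕ)
    (h1 : z.card ≤ k) (h2 : k ≤ z'.card) : ∃ y, pr y = pr z ∧ y.card = k := by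
  induction h using Relation.ReflTransGen.head_induction_on with
  | refl => exact ⟨z', rfl, by omega⟩
  | @head a c hac _ ih =>
    by_cases hk : k = a.card
    · exact ⟨a, rfl, hk.symm⟩
    · obtain ⟨y, hy, hc⟩ := ih (by have := step_card hac; omega)
      exact ⟨y, by rw [hy, step_pr hac], hc⟩

lemma mem_ZB (z : Multiset (At G)) : z.map Subtype.val ∈ ZB (pr z) := by
  refine ⟨fun U hU => ?_, rfl⟩
  obtain ⟨V, _, rfl⟩ := Multiset.mem_map.1 hU
  exact V.2

lemma exists_lift {A : Multiset G} {z : Multiset (Multiset G)} (h : z ∈ ZB A) :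
    ∃ y : Multiset (At G), y.map Subtype.val = z ∧ pr y = A := by
  obtain ⟨h1, h2⟩ := h
  lift z to Multiset (At G) using h1
  exact ⟨z, rfl, h2⟩

lemma step_dist {z z' : Multiset (At G)} (h : Step z z') :
    fdistB (z.map Subtype.val) (z'.map Subtype.val) ≤ 3 := by
  obtain ⟨c, a, b, rfl, rfl, h1, h2, _⟩ := h
  unfold fdistB
  letI := Classical.decEq (Multiset G)
  have hc : c.map Subtype.val ≤ (c + a).map Subtype.val ∩ (c + b).map Subtype.val := by
    rw [Multiset.map_add, Multiset.map_add]
    exact Multiset.le_inter (Multiset.le_add_right _ _) (Multiset.le_add_right _ _)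
  refine max_le ?_ ?_
  · refine (Multiset.card_le_card (tsub_le_tsub_left hc _)).trans ?_
    rw [Multiset.map_add, add_tsub_cancel_left]
    simpa using h1
  · refine (Multiset.card_le_card (tsub_le_tsub_left hc _)).trans ?_
    rw [Multiset.map_add, add_tsub_cancel_left]
    simpa using h2

lemma chain_seq {z z' : Multiset (At G)} (h : Relation.ReflTransGen Step z z') :
    ∃ (n : ℕ) (f : ℕ → Multiset (Multiset G)),
    f 0 = z.map Subtype.val ∧ f n = z'.map Subtype.val ∧ (∀ i ≤ n, f i ∈ ZB (pr z)) ∧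
    ∀ i < n, fdistB (f i) (f (i + 1)) ≤ 3 := by
  induction h using Relation.ReflTransGen.head_induction_on with
  | refl => exact ⟨0, fun _ => z'.map Subtype.val, rfl, rfl, fun _ _ => mem_ZB _, by simp⟩
  | @head a c hac _ ih =>
    obtain ⟨n, f, h0, hn, hz, hd⟩ := ih
    refine ⟨n + 1, fun i => Nat.casesOn i (a.map Subtype.val) f, rfl, hn, ?_, ?_⟩
    · rintro (_ | i) hi
      · exact mem_ZB _
      · rw [step_pr hac]; exact hz i (by omega)
    · rintro (_ | i) hi
      · change fdistB (a.map Subtype.val) (f 0) ≤ 3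
        rw [h0]; exact step_dist hac
      · exact hd i (by omega)

lemma mem_LSet {A : Multiset G} {k : ℕ} :
    k ∈ LSet A ↔ ∃ z : Multiset (At G), pr z = A ∧ z.card = k := by
  constructor
  · rintro ⟨l, h1, h2, h3⟩
    obtain ⟨y, rfl, hy⟩ := exists_lift (A := A) (z := l) ⟨h2, h3⟩
    exact ⟨y, hy, by simpa using h1⟩
  · rintro ⟨z, rfl, rfl⟩
    exact ⟨z.map Subtype.val, by simp, (mem_ZB z).1, (mem_ZB z).2⟩

lemma LSet_bdd (A : Multiset G) : BddAbove (LSet A) := by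
  refine ⟨A.card, fun k hk => ?_⟩
  obtain ⟨z, rfl, rfl⟩ := mem_LSet.1 hk
  exact card_le_pr z

lemma LSet_ne {A : Multiset G} (h : A.sum = 0) : (LSet A).Nonempty := by
  obtain ⟨z, hz⟩ := exists_fac A h
  exact ⟨_, mem_LSet.2 ⟨z, hz, rfl⟩⟩

lemma card_le_Dav [Fintype G] {U : Multiset G} (hU : IsMinZS U) : U.card ≤ DavC G := by
  refine le_csSup ⟨Fintype.card G, ?_⟩ ⟨U, hU, rfl⟩
  rintro _ ⟨V, hV, rfl⟩
  exact card_atom_le hV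

open Classical in
lemma bound1 (z : Multiset (At G)) : 2 * z.card ≤ (pr z).card + (pr z).count 0 := by
  induction z using Multiset.induction_on with
  | empty => simp
  | cons U z ih =>
    have : 2 ≤ U.1.card + U.1.count 0 := by
      by_cases h : (0 : G) ∈ U.1
      · rw [eq_zero_of_mem U.2 h]; simp
      · have := two_le_card U.2 h
        omega
    simp only [pr_cons, Multiset.card_cons, Multiset.card_add, Multiset.count_add]
    omega

open Classical in
lemma bound2 [Fintype G] (z : Multiset (At G)) :
    (pr z).card + DavC G * (pr z).count 0 ≤ DavC G * z.card + (pr z).count 0 := by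
  induction z using Multiset.induction_on with
  | empty => simp
  | cons U z ih =>
    have : U.1.card + DavC G * U.1.count 0 ≤ DavC G + U.1.count 0 := by
      by_cases h : (0 : G) ∈ U.1
      · rw [eq_zero_of_mem U.2 h]; simp [add_comm]
      · have := card_le_Dav U.2
        rw [Multiset.count_eq_zero_of_notMem h]
        omega
    simp only [pr_cons, Multiset.card_cons, Multiset.card_add, Multiset.count_add, mul_add, mul_one]
    omega

lemma rho_iff (L : Set ℕ) (D : ℕ) (hD : 1 ≤ D) :
    rhoSet L = (D : ℚ) / 2 ↔ 2 * sSup L = D * sInf L ∧ sInf L ≠ 0 := by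
  unfold rhoSet
  have hD' : (D : ℚ) ≠ 0 := by
    have : D ≠ 0 := by omega
    exact_mod_cast this
  by_cases h : sInf L = 0
  · rw [h]
    constructor
    · intro h1
      rw [Nat.cast_zero, div_zero] at h1
      exact absurd h1.symm (div_ne_zero hD' two_ne_zero)
    · intro h1; exact absurd rfl h1.2
  · have h' : ((sInf L : ℕ) : ℚ) ≠ 0 := by exact_mod_cast h
    rw [div_eq_div_iff h' two_ne_zero]
    constructor
    · intro h1
      refine ⟨?_, h⟩
      have : sSup L * 2 = D * sInf L := by exact_mod_cast h1
      omega
    · rintro ⟨h1, _⟩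
      have : sSup L * 2 = D * sInf L := by omega
      exact_mod_cast this

lemma pairs_fac (X : Multiset G) (h : (0 : G) ∉ X) :
    ∃ z : Multiset (At G), pr z = X + X.map (fun x => -x) ∧ z.card = X.card := by
  induction X using Multiset.induction_on with
  | empty => exact ⟨0, by simp⟩
  | cons a X ih =>
    simp only [Multiset.mem_cons, not_or] at h
    obtain ⟨z, h1, h2⟩ := ih h.2
    refine ⟨pA a (fun e => h.1 e.symm) ::ₘ z, ?_, by simp [h2]⟩
    rw [pr_cons, h1, pA, Multiset.map_cons]
    simp only [← Multiset.singleton_add]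
    abel

def GoodB (D : ℕ) (B : Multiset G) : Prop :=
  (∃ z : Multiset (At G), pr z = B ∧ 2 * z.card = B.card) ∧
  (∃ z : Multiset (At G), pr z = B ∧ D * z.card = B.card) ∧ (0 : G) ∉ B

lemma goodB_zero (D : ℕ) : GoodB D (0 : Multiset G) :=
  ⟨⟨0, by simp⟩, ⟨0, by simp⟩, by simp⟩

lemma goodB_add (D : ℕ) (B C : Multiset G) (hB : GoodB D B) (hC : GoodB D C) : GoodB D (B + C) := by
  obtain ⟨⟨z, h1, h2⟩, ⟨y, h3, h4⟩, h5⟩ := hB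
  obtain ⟨⟨z', h1', h2'⟩, ⟨y', h3', h4'⟩, h5'⟩ := hC
  refine ⟨⟨z + z', by simp [h1, h1'], ?_⟩, ⟨y + y', by simp [h3, h3'], ?_⟩, by simp [h5, h5']⟩
  · rw [Multiset.card_add, Multiset.card_add]; omega
  · rw [Multiset.card_add, Multiset.card_add, mul_add]; omega

lemma goodB_nsmul (D n : ℕ) (B : Multiset G) (hB : GoodB D B) : GoodB D (n • B) := by
  induction n with
  | zero => rw [zero_nsmul]; exact goodB_zero D
  | succ n ih => rw [succ_nsmul]; exact goodB_add D _ _ ih hB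

lemma goodB_atom (D : ℕ) (hD : 2 ≤ D) (U : Multiset G) (hU : IsMinZS U) (hc : U.card = D) :
    GoodB D (U + U.map (fun x => -x)) := by
  have h0 : (0 : G) ∉ U := by
    intro h0
    have := congrArg Multiset.card (eq_zero_of_mem hU h0)
    simp at this
    omega
  obtain ⟨z, h1, h2⟩ := pairs_fac U h0
  refine ⟨⟨z, h1, by simp [h2]; omega⟩, ⟨{⟨U, hU⟩, ⟨_, neg_atom hU⟩}, ?_, ?_⟩, ?_⟩
  · simp [Multiset.insert_eq_cons]
  · simp [hc]; omega
  · simpa using h0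

open Classical in
lemma exists_Astar [Fintype G] (hD : 2 ≤ DavC G) (K : ℕ)
    (hP : ∀ g : G, g ≠ 0 → ∃ A : Multiset G, IsMinZS A ∧ A.card = DavC G ∧ g ∈ A) :
    ∃ B : Multiset G, GoodB (DavC G) B ∧ ∀ s : G, s ≠ 0 → K < B.count s := by
  choose F hF1 hF2 hF3 using hP
  let f : G → Multiset G := fun g => if h : g ≠ 0 then F g h + (F g h).map (fun x => -x) else 0
  refine ⟨∑ g : G, (K + 1) • f g, ?_, ?_⟩
  · refine Finset.sum_induction _ (GoodB (DavC G)) (goodB_add _) (goodB_zero _) ?_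
    intro g _
    apply goodB_nsmul
    by_cases h : g ≠ 0
    · simp only [f, dif_pos h]
      exact goodB_atom _ hD _ (hF1 g h) (hF2 g h)
    · simp only [f, dif_neg h]
      exact goodB_zero _
  · intro s hs
    rw [Multiset.count_sum']
    have h1 : ((K + 1) • f s).count s ≤ ∑ g : G, ((K + 1) • f g).count s :=
      Finset.single_le_sum (f := fun g => ((K + 1) • f g).count s) (fun _ _ => Nat.zero_le _)
        (Finset.mem_univ s)
    refine lt_of_lt_of_le ?_ h1
    rw [Multiset.count_nsmul]
    have : 0 < (f s).count s := by
      rw [Multiset.count_pos]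
      simp only [f, dif_pos hs, Multiset.mem_add]
      exact Or.inl (hF3 s hs)
    nlinarith

end final

end ZSProof

theorem stmt15 {G : Type*} [AddCommGroup G] [Fintype G]
    (hPstar : ∀ g : G, g ≠ 0 →
      ∃ A : Multiset G, IsMinZS A ∧ A.card = DavC G ∧ g ∈ A) :
    ∃ Astar : Multiset G, Astar.sum = 0 ∧
      ∀ A : Multiset G, A.sum = 0 → rhoSet (LSet A) = (DavC G : ℚ) / 2 →
        CatenaryLE (Astar + A) 3 ∧ IsIntervalSet (LSet (Astar + A)) ∧
        rhoSet (LSet (Astar + A)) = (DavC G : ℚ) / 2 := by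
  classical
  have hD1 : 1 ≤ DavC G := by simpa using ZSProof.card_le_Dav (ZSProof.isMin_zero (G := G))
  have hD2 : ∀ A : Multiset G, A.sum = 0 → rhoSet (LSet A) = (DavC G : ℚ) / 2 → 2 ≤ DavC G := by
    intro A hA hr
    by_contra hc
    have e : DavC G = 1 := by omega
    obtain ⟨h1, h2⟩ := (ZSProof.rho_iff _ _ hD1).1 hr
    have h3 : sInf (LSet A) ≤ sSup (LSet A) :=
      Nat.sInf_le (Nat.sSup_mem (ZSProof.LSet_ne hA) (ZSProof.LSet_bdd A))
    rw [e] at h1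
    omega
  by_cases hD : 2 ≤ DavC G
  swap
  · exact ⟨0, by simp, fun A hA hr => absurd (hD2 A hA hr) hD⟩
  obtain ⟨K, hK⟩ := ZSProof.connect G
  obtain ⟨B, ⟨⟨z1, hz1, hc1⟩, ⟨z2, hz2, hc2⟩, hB0⟩, hBK⟩ := ZSProof.exists_Astar hD K hPstar
  have hBs : B.sum = 0 := by rw [← hz1]; exact ZSProof.pr_sum _
  refine ⟨B, hBs, fun A hA hr => ?_⟩
  have hBA : (B + A).sum = 0 := by simp [hBs, hA]
  have conn : ∀ z z' : Multiset (ZSProof.At G), ZSProof.pr z = B + A → ZSProof.pr z' = B + A →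
      Relation.ReflTransGen ZSProof.Step z z' := by
    intro z z' h h'
    apply ZSProof.chain_of_pi
    apply hK _ _ (h.trans h'.symm)
    intro s hs
    rw [h, Multiset.count_add]
    have := hBK s hs
    omega
  have hmax := Nat.sSup_mem (ZSProof.LSet_ne hBA) (ZSProof.LSet_bdd (B + A))
  have hmin := Nat.sInf_mem (ZSProof.LSet_ne hBA)
  refine ⟨?_, ⟨ZSProof.LSet_ne hBA, ?_⟩, ?_⟩
  · intro z hz z' hz'
    obtain ⟨y, rfl, hy⟩ := ZSProof.exists_lift hz
    obtain ⟨y', rfl, hy'⟩ := ZSProof.exists_lift hz'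
    have := ZSProof.chain_seq (conn y y' hy hy')
    rwa [hy] at this
  · apply Set.Subset.antisymm
    · intro k hk
      exact ⟨Nat.sInf_le hk, le_csSup (ZSProof.LSet_bdd _) hk⟩
    · rintro k ⟨h1, h2⟩
      obtain ⟨y, hy, hyc⟩ := ZSProof.mem_LSet.1 hmin
      obtain ⟨y', hy', hyc'⟩ := ZSProof.mem_LSet.1 hmax
      obtain ⟨x, hx, hxc⟩ := ZSProof.ivt (conn y y' hy hy') k (by omega) (by omega)
      exact ZSProof.mem_LSet.2 ⟨x, hx.trans hy, hxc⟩
  · obtain ⟨r1, r2⟩ := (ZSProof.rho_iff _ _ hD1).1 hr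
    rw [ZSProof.rho_iff _ _ hD1]
    obtain ⟨a, ha, hac⟩ := ZSProof.mem_LSet.1
      (Nat.sSup_mem (ZSProof.LSet_ne hA) (ZSProof.LSet_bdd A))
    obtain ⟨b, hb, hbc⟩ := ZSProof.mem_LSet.1 (Nat.sInf_mem (ZSProof.LSet_ne hA))
    obtain ⟨y, hy, hyc⟩ := ZSProof.mem_LSet.1 hmin
    obtain ⟨y', hy', hyc'⟩ := ZSProof.mem_LSet.1 hmax
    have u1 : z1.card + a.card ≤ sSup (LSet (B + A)) :=
      le_csSup (ZSProof.LSet_bdd _) (ZSProof.mem_LSet.2 ⟨z1 + a, by simp [hz1, ha], by simp⟩)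
    have u2 : sInf (LSet (B + A)) ≤ z2.card + b.card :=
      Nat.sInf_le (ZSProof.mem_LSet.2 ⟨z2 + b, by simp [hz2, hb], by simp⟩)
    have b1 := ZSProof.bound1 a
    have b2 := ZSProof.bound2 b
    have b3 := ZSProof.bound1 y'
    have b4 := ZSProof.bound2 y
    have hB0' : B.count 0 = 0 := Multiset.count_eq_zero_of_notMem hB0
    rw [ha] at b1
    rw [hb] at b2
    rw [hy', Multiset.card_add, Multiset.count_add, hB0', zero_add] at b3
    rw [hy, Multiset.card_add, Multiset.count_add, hB0', zero_add] at b4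
    rw [hbc] at b2 u2
    rw [hac] at b1 u1
    rw [hyc] at b4
    rw [hyc'] at b3
    have u3 := Nat.mul_le_mul_left (DavC G) u2
    rw [mul_add] at u3
    have u4 : 2 * A.count 0 ≤ DavC G * A.count 0 := Nat.mul_le_mul_right _ hD
    have u5 : 1 ≤ DavC G * sInf (LSet A) := Nat.mul_pos hD1 (Nat.pos_of_ne_zero r2)
    refine ⟨by omega, fun h0 => ?_⟩
    rw [h0] at b4
    omega
end

section
/- Let G be a finite abelian group with |G| ≥ 3 satisfying Property P. Then for every n, every zero-sum sequence counted below in the numerator is also counted in the denominator, and lim_{n→∞} |{A ∈ B_ρ(G) : L(A) is an interval and n ∈ L_{B_ρ(G)}(A)}| / |{A ∈ B_ρ(G) : n ∈ L_{B_ρ(G)}(A)}| = 1. -/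
def Brho (G : Type*) [AddCommGroup G] : Set (Multiset G) :=
  {A | A.sum = 0 ∧ (A = 0 ∨ rhoSet (LSet A) = (DavC G : ℚ) / 2)}

def IsAtomBrho {G : Type*} [AddCommGroup G] (U : Multiset G) : Prop :=
  U ∈ Brho G ∧ U ≠ 0 ∧ ∀ V ∈ Brho G, ∀ W ∈ Brho G, U = V + W → V = 0 ∨ W = 0

def LSetB {G : Type*} [AddCommGroup G] (A : Multiset G) : Set ℕ :=
  {k | ∃ l : Multiset (Multiset G), l.card = k ∧ (∀ U ∈ l, IsAtomBrho U) ∧ l.sum = A}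

section Khov
open Polynomial Filter

def khS (k : ℕ) (S : Set (Fin (k+1) → ℕ)) (n : ℕ) : Set (Fin (k+1) → ℕ) := {x | x ∈ S ∧ ∑ i, x i = n}

lemma khS_finite (k : ℕ) (S : Set (Fin (k+1) → ℕ)) (n : ℕ) : (khS k S n).Finite := by
  apply (Finset.finite_toSet (Finset.piAntidiag (Finset.univ : Finset (Fin (k+1))) n)).subset
  intro x hx
  simp [hx.2]

def khPoly (k : ℕ) (S : Set (Fin (k+1) → ℕ)) : Prop :=
  ∃ p : ℝ[X], ∀ᶠ n : ℕ in atTop, ((khS k S n).ncard : ℝ) = p.eval (n : ℝ)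

lemma kh_card (k n : ℕ) : (khS k Set.univ n).ncard = (n + k).choose k := by
  have h1 : khS k Set.univ n = (Finset.piAntidiag (Finset.univ : Finset (Fin (k+1))) n : Set _) := by
    ext x; simp [khS]
  rw [h1, Set.ncard_coe_finset, ← Finset.map_sym_eq_piAntidiag, Finset.card_map]
  rw [Finset.sym_univ, Finset.card_univ, Sym.card_sym_eq_choose, Fintype.card_fin]
  have : k + 1 + n - 1 = n + k := by omega
  rw [this, Nat.choose_symm_add]

lemma kh_Ici (k : ℕ) (f : Fin (k+1) → ℕ) : khPoly k (Set.Ici f) := by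
  refine ⟨preHilbertPoly ℝ k (∑ i, f i), ?_⟩
  filter_upwards [eventually_ge_atTop (∑ i, f i)] with n hn
  rw [preHilbertPoly_eq_choose_sub_add ℝ k hn, ← kh_card]
  congr 1
  symm
  have : khS k (Set.Ici f) n = (fun x => f + x) '' (khS k Set.univ (n - ∑ i, f i)) := by
    ext x
    constructor
    · rintro ⟨h1, h2⟩
      obtain ⟨z, rfl⟩ := exists_add_of_le (show f ≤ x from h1)
      refine ⟨z, ⟨trivial, ?_⟩, rfl⟩
      simp only [Pi.add_apply, Finset.sum_add_distrib] at h2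
      omega
    · rintro ⟨z, ⟨-, h⟩, rfl⟩
      refine ⟨by simp [Set.mem_Ici], ?_⟩
      simp only [Pi.add_apply, Finset.sum_add_distrib]
      omega
  rw [this, Set.ncard_image_of_injective _ (add_right_injective f)]

lemma kh_union (k : ℕ) (S T : Set (Fin (k+1) → ℕ)) (hS : khPoly k S) (hT : khPoly k T)
    (hST : khPoly k (S ∩ T)) : khPoly k (S ∪ T) := by
  obtain ⟨p, hp⟩ := hS
  obtain ⟨q, hq⟩ := hT
  obtain ⟨r, hr⟩ := hST
  refine ⟨p + q - r, ?_⟩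
  filter_upwards [hp, hq, hr] with n h1 h2 h3
  have h := Set.ncard_union_add_ncard_inter (khS k S n) (khS k T n) (khS_finite ..) (khS_finite ..)
  have e1 : khS k S n ∪ khS k T n = khS k (S ∪ T) n := by
    ext x; simp only [khS, Set.mem_union, Set.mem_ofPred_eq]; tauto
  have e2 : khS k S n ∩ khS k T n = khS k (S ∩ T) n := by
    ext x; simp only [khS, Set.mem_inter_iff, Set.mem_ofPred_eq]; tauto
  rw [e1, e2] at h
  have h' : ((khS k (S ∪ T) n).ncard : ℝ) + (khS k (S ∩ T) n).ncard = (khS k S n).ncard + (khS k T n).ncard := by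
    exact_mod_cast h
  simp only [eval_sub, eval_add]
  linarith

lemma kh_compl (k : ℕ) (S : Set (Fin (k+1) → ℕ)) (hS : khPoly k S) : khPoly k Sᶜ := by
  obtain ⟨p, hp⟩ := hS
  have hu := kh_Ici k 0
  have : Set.Ici (0 : Fin (k+1) → ℕ) = Set.univ := by ext; simp
  rw [this] at hu
  obtain ⟨q, hq⟩ := hu
  refine ⟨q - p, ?_⟩
  filter_upwards [hp, hq] with n h1 h2
  have h := Set.ncard_sdiff_add_ncard_of_subset (s := khS k S n) (t := khS k Set.univ n)
    (fun x hx => ⟨trivial, hx.2⟩) (khS_finite ..)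
  have e1 : khS k Set.univ n \ khS k S n = khS k Sᶜ n := by
    ext x; simp only [khS, Set.mem_sdiff, Set.mem_compl_iff, Set.mem_univ, Set.mem_ofPred_eq]; tauto
  rw [e1] at h
  have h' : ((khS k Sᶜ n).ncard : ℝ) + (khS k S n).ncard = (khS k Set.univ n).ncard := by
    exact_mod_cast h
  simp only [eval_sub]
  linarith

lemma kh_finset (k m : ℕ) : ∀ F : Finset (Fin (k+1) → ℕ), F.card ≤ m →
    khPoly k {x | ∃ f ∈ F, f ≤ x} := by
  classical
  induction m with
  | zero =>
    intro F hF
    have : F = ∅ := by simpa using hF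
    subst this
    exact ⟨0, by simp [khS]⟩
  | succ m ih =>
    intro F hF
    rcases F.eq_empty_or_nonempty with h | ⟨f, hf⟩
    · exact ih F (by simp [h])
    have e : {x | ∃ g ∈ F, g ≤ x} = {x | ∃ g ∈ F.erase f, g ≤ x} ∪ Set.Ici f := by
      ext x
      simp only [Set.mem_ofPred_eq, Set.mem_union, Set.mem_Ici, Finset.mem_erase]
      constructor
      · rintro ⟨g, hg, hx⟩
        by_cases hgf : g = f
        · right; rwa [← hgf]
        · left; exact ⟨g, ⟨hgf, hg⟩, hx⟩
      · rintro (⟨g, hg, hx⟩ | h)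
        · exact ⟨g, hg.2, hx⟩
        · exact ⟨f, hf, h⟩
    have hc : (F.erase f).card ≤ m := by rw [Finset.card_erase_of_mem hf]; omega
    rw [e]
    refine kh_union _ _ _ (ih _ hc) (kh_Ici k f) ?_
    have e2 : {x | ∃ g ∈ F.erase f, g ≤ x} ∩ Set.Ici f
        = {x | ∃ g ∈ (F.erase f).image (fun g => g ⊔ f), g ≤ x} := by
      ext x
      simp only [Set.mem_ofPred_eq, Set.mem_inter_iff, Set.mem_Ici, Finset.mem_image]
      constructor
      · rintro ⟨⟨g, hg, hx⟩, h⟩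
        exact ⟨g ⊔ f, ⟨g, hg, rfl⟩, sup_le hx h⟩
      · rintro ⟨_, ⟨g, hg, rfl⟩, h⟩
        exact ⟨⟨g, hg, le_sup_left.trans h⟩, le_sup_right.trans h⟩
    rw [e2]
    exact ih _ (Finset.card_image_le.trans hc)

lemma kh_upper (k : ℕ) (S : Set (Fin (k+1) → ℕ)) (hS : IsUpperSet S) : khPoly k S := by
  have hfin : {x | Minimal (· ∈ S) x}.Finite :=
    WellQuasiOrderedLE.finite_of_isAntichain (setOfPred_minimal_antichain _)
  have := kh_finset k _ hfin.toFinset le_rfl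
  convert this using 1
  ext x
  simp only [Set.Finite.mem_toFinset, Set.mem_ofPred_eq]
  constructor
  · intro hx
    obtain ⟨m, hm, h⟩ := exists_minimal_le_of_wellFoundedLT (· ∈ S) x hx
    exact ⟨m, h, hm⟩
  · rintro ⟨f, hf, hx⟩
    exact hS hx hf.prop

theorem khovanskii {M : Type*} [AddCommMonoid M] (k : ℕ) (φ : (Fin (k+1) → ℕ) →+ M) :
    ∃ p : ℝ[X], ∀ᶠ n : ℕ in atTop, ((φ '' {x | ∑ i, x i = n}).ncard : ℝ) = p.eval (n : ℝ) := by
  set S : Set (Fin (k+1) → ℕ) := {x | ∃ y, toLex y < toLex x ∧ ∑ i, y i = ∑ i, x i ∧ φ y = φ x} with hS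
  have hup : IsUpperSet S := by
    rintro x x' hx ⟨y, h1, h2, h3⟩
    obtain ⟨z, rfl⟩ := exists_add_of_le hx
    refine ⟨y + z, ?_, ?_, ?_⟩
    · rw [toLex_add, toLex_add]; exact add_lt_add_left h1 _
    · simp [Finset.sum_add_distrib, h2]
    · simp [h3]
  obtain ⟨p, hp⟩ := kh_compl k S (kh_upper k S hup)
  refine ⟨p, ?_⟩
  filter_upwards [hp] with n hn
  rw [← hn]
  congr 1
  have e : φ '' {x | ∑ i, x i = n} = φ '' (khS k Sᶜ n) := by
    apply Set.Subset.antisymm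
    · rintro _ ⟨x, hx, rfl⟩
      have hx : ∑ i, x i = n := hx
      have hfin : {y : Fin (k+1) → ℕ | ∑ i, y i = n ∧ φ y = φ x}.Finite :=
        (khS_finite k Set.univ n).subset (fun y hy => ⟨trivial, hy.1⟩)
      obtain ⟨y, hy, hmin⟩ := Set.exists_min_image _ (fun y => toLex y) hfin ⟨x, hx, rfl⟩
      refine ⟨y, ⟨?_, hy.1⟩, hy.2⟩
      rintro ⟨z, h1, h2, h3⟩
      exact absurd h1 (not_lt.mpr (hmin z ⟨h2.trans hy.1, h3.trans hy.2⟩))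
    · rintro _ ⟨x, hx, rfl⟩
      exact ⟨x, hx.2, rfl⟩
  rw [e]
  apply Set.InjOn.ncard_image
  intro x hx y hy hxy
  rcases lt_trichotomy (toLex x) (toLex y) with h | h | h
  · exact absurd ⟨x, h, hx.2.trans hy.2.symm, hxy⟩ hy.1
  · exact toLex.injective h
  · exact absurd ⟨y, h, hy.2.trans hx.2.symm, hxy.symm⟩ hx.1

lemma poly_ratio (a : ℕ → ℕ) (p : ℝ[X]) (hp : ∀ᶠ n : ℕ in atTop, (a n : ℝ) = p.eval (n : ℝ))
    (ha : ∀ n, 0 < a n) (m : ℕ) :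
    Tendsto (fun n : ℕ => (a (n - m) : ℝ) / (a n : ℝ)) atTop (nhds 1) := by
  have hp0 : p ≠ 0 := by
    rintro rfl
    obtain ⟨n, hn⟩ := hp.exists
    have := ha n
    simp at hn
    omega
  have hnd : (X - C (m : ℝ)).natDegree = 1 := natDegree_X_sub_C _
  have hq0 : p.comp (X - C (m : ℝ)) ≠ 0 := by
    intro h
    have := leadingCoeff_comp (p := p) (q := X - C (m : ℝ)) (by rw [hnd]; exact one_ne_zero)
    rw [h, leadingCoeff_X_sub_C, one_pow, mul_one, leadingCoeff_zero] at this
    exact hp0 (leadingCoeff_eq_zero.mp this.symm)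
  have hdeg : (p.comp (X - C (m : ℝ))).degree = p.degree := by
    rw [degree_eq_natDegree hq0, degree_eq_natDegree hp0, natDegree_comp, hnd, mul_one]
  have h := div_tendsto_atTop_leadingCoeff_div_of_degree_eq _ _ hdeg
  rw [leadingCoeff_comp (by rw [hnd]; exact one_ne_zero), leadingCoeff_X_sub_C, one_pow, mul_one,
    div_self (leadingCoeff_ne_zero.mpr hp0)] at h
  refine (h.comp tendsto_natCast_atTop_atTop).congr' ?_
  filter_upwards [hp, (tendsto_sub_atTop_nat m).eventually hp, eventually_ge_atTop m] with n h1 h2 h3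
  simp only [Function.comp]
  rw [h1, h2]
  simp [Nat.cast_sub h3]
end Khov
section Arith
set_option linter.unusedSectionVars false
variable {G : Type*} [AddCommGroup G]

theorem ms_wqo (α : Type*) [Finite α] : WellQuasiOrderedLE (Multiset α) := by
  classical exact (Finsupp.orderIsoMultiset (ι := α)).wellQuasiOrderedLE_iff.mp inferInstance

theorem minZS_finite [Finite G] : {U : Multiset G | IsMinZS U}.Finite := by
  have := ms_wqo G
  apply WellQuasiOrderedLE.finite_of_isAntichain
  intro U hU V hV hne hle
  exact hne (hV.2.2 U hle hU.1 hU.2.1)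

theorem card_le_D [Finite G] {U : Multiset G} (hU : IsMinZS U) : U.card ≤ DavC G := by
  apply le_csSup
  · have : {n | ∃ U : Multiset G, IsMinZS U ∧ U.card = n} = Multiset.card '' {U : Multiset G | IsMinZS U} := by
      ext; simp
    rw [this]
    exact (minZS_finite.image _).bddAbove
  · exact ⟨U, hU, rfl⟩

theorem LSet_add {A B : Multiset G} {a b : ℕ} (ha : a ∈ LSet A) (hb : b ∈ LSet B) :
    a + b ∈ LSet (A + B) := by
  obtain ⟨l, h1, h2, h3⟩ := ha
  obtain ⟨m, h4, h5, h6⟩ := hb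
  refine ⟨l + m, by simp [h1, h4], ?_, by simp [h3, h6]⟩
  intro U hU
  rcases Multiset.mem_add.mp hU with h | h
  · exact h2 U h
  · exact h5 U h

theorem LSet_one {U : Multiset G} (h : IsMinZS U) : 1 ∈ LSet U :=
  ⟨{U}, by simp, by simpa using h, by simp⟩

theorem LSet_zero : 0 ∈ LSet (0 : Multiset G) := ⟨0, by simp, by simp, by simp⟩

theorem minZS_zero_mem {U : Multiset G} (h : IsMinZS U) (h0 : (0 : G) ∈ U) : U = {0} :=
  (h.2.2 {0} (by simpa using h0) (by simp) (by simp)).symm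

theorem minZS_two_le {U : Multiset G} (h : IsMinZS U) (h0 : (0 : G) ∉ U) : 2 ≤ U.card := by
  by_contra hc
  have h1 : U.card ≠ 0 := by simpa using h.1
  have h2 : U.card = 1 := by omega
  obtain ⟨g, rfl⟩ := Multiset.card_eq_one.mp h2
  have := h.2.1
  simp at this
  simp [this] at h0

/-- number of zeros -/
noncomputable def zc (A : Multiset G) : ℕ := by
  classical exact A.count 0

theorem zc_add (A B : Multiset G) : zc (A + B) = zc A + zc B := by
  simp [zc]

theorem zc_eq_zero {A : Multiset G} : zc A = 0 ↔ (0 : G) ∉ A := by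
  simp [zc]

theorem zc_zero : zc (0 : Multiset G) = 0 := by simp [zc]
theorem zc_sing : zc ({0} : Multiset G) = 1 := by simp [zc]

theorem sum_low (l : Multiset (Multiset G)) (h : ∀ U ∈ l, IsMinZS U) :
    2 * l.card ≤ l.sum.card + zc l.sum := by
  induction l using Multiset.induction_on with
  | empty => simp
  | cons U l ih =>
    have ih := ih (fun V hV => h V (Multiset.mem_cons_of_mem hV))
    have hU := h U (Multiset.mem_cons_self U l)
    have : 2 ≤ U.card + zc U := by
      by_cases h0 : (0 : G) ∈ U
      · rw [minZS_zero_mem hU h0, zc_sing]; simp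
      · have := minZS_two_le hU h0; omega
    simp only [Multiset.card_cons, Multiset.sum_cons, Multiset.card_add, zc_add]
    omega

theorem sum_high [Finite G] (hD : 3 ≤ DavC G) (l : Multiset (Multiset G)) (h : ∀ U ∈ l, IsMinZS U) :
    l.sum.card + 2 * zc l.sum ≤ DavC G * l.card := by
  induction l using Multiset.induction_on with
  | empty => simp [zc_zero]
  | cons U l ih =>
    have ih := ih (fun V hV => h V (Multiset.mem_cons_of_mem hV))
    have hU := h U (Multiset.mem_cons_self U l)
    have : U.card + 2 * zc U ≤ DavC G := by
      by_cases h0 : (0 : G) ∈ U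
      · rw [minZS_zero_mem hU h0, zc_sing]; simp; omega
      · have := card_le_D hU; rw [zc_eq_zero.mpr h0]; omega
    simp only [Multiset.card_cons, Multiset.sum_cons, Multiset.card_add, zc_add, mul_add]
    omega

theorem card_sum_const (c : ℕ) (l : Multiset (Multiset G)) (h : ∀ U ∈ l, U.card = c) :
    l.sum.card = c * l.card := by
  induction l using Multiset.induction_on with
  | empty => simp
  | cons U l ih =>
    have ih := ih (fun V hV => h V (Multiset.mem_cons_of_mem hV))
    have hU := h U (Multiset.mem_cons_self U l)
    simp only [Multiset.card_cons, Multiset.sum_cons, Multiset.card_add, mul_add]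
    omega

theorem card_sum_ge (c : ℕ) (l : Multiset (Multiset G)) (h : ∀ U ∈ l, c ≤ U.card) :
    c * l.card ≤ l.sum.card ∧ (l.sum.card = c * l.card → ∀ U ∈ l, U.card = c) := by
  induction l using Multiset.induction_on with
  | empty => simp
  | cons U l ih =>
    obtain ⟨ih1, ih2⟩ := ih (fun V hV => h V (Multiset.mem_cons_of_mem hV))
    have hU := h U (Multiset.mem_cons_self U l)
    simp only [Multiset.card_cons, Multiset.sum_cons, Multiset.card_add, mul_add, Multiset.mem_cons]
    refine ⟨by omega, fun he V hV => ?_⟩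
    rcases hV with rfl | hV
    · omega
    · exact ih2 (by omega) V hV

theorem card_sum_le (c : ℕ) (l : Multiset (Multiset G)) (h : ∀ U ∈ l, U.card ≤ c) :
    l.sum.card ≤ c * l.card ∧ (l.sum.card = c * l.card → ∀ U ∈ l, U.card = c) := by
  induction l using Multiset.induction_on with
  | empty => simp
  | cons U l ih =>
    obtain ⟨ih1, ih2⟩ := ih (fun V hV => h V (Multiset.mem_cons_of_mem hV))
    have hU := h U (Multiset.mem_cons_self U l)
    simp only [Multiset.card_cons, Multiset.sum_cons, Multiset.card_add, mul_add, Multiset.mem_cons]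
    refine ⟨by omega, fun he V hV => ?_⟩
    rcases hV with rfl | hV
    · omega
    · exact ih2 (by omega) V hV

/-- `A` is a sum of atoms of length `D` -/
def SumOf (c : ℕ) (A : Multiset G) : Prop :=
  ∃ l : Multiset (Multiset G), (∀ U ∈ l, IsMinZS U ∧ U.card = c) ∧ l.sum = A

theorem SumOf.add {c : ℕ} {A B : Multiset G} (hA : SumOf c A) (hB : SumOf c B) : SumOf c (A + B) := by
  obtain ⟨l, h1, h2⟩ := hA
  obtain ⟨m, h3, h4⟩ := hB
  refine ⟨l + m, ?_, by simp [h2, h4]⟩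
  intro U hU
  rcases Multiset.mem_add.mp hU with h | h
  · exact h1 U h
  · exact h3 U h

theorem SumOf.zero {c : ℕ} : SumOf c (0 : Multiset G) := ⟨0, by simp, by simp⟩

theorem SumOf.sum_eq {c : ℕ} {A : Multiset G} (hA : SumOf c A) : A.sum = 0 := by
  obtain ⟨l, h1, rfl⟩ := hA
  induction l using Multiset.induction_on with
  | empty => simp
  | cons U l ih =>
    have ih := ih (fun V hV => h1 V (Multiset.mem_cons_of_mem hV))
    simp [ih, (h1 U (Multiset.mem_cons_self U l)).1.2.1]

theorem SumOf.mem_LSet {c : ℕ} {A : Multiset G} (hA : SumOf c A) :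
    ∃ k ∈ LSet A, A.card = c * k := by
  obtain ⟨l, h1, rfl⟩ := hA
  exact ⟨l.card, ⟨l, rfl, fun U hU => (h1 U hU).1, rfl⟩, card_sum_const c l fun U hU => (h1 U hU).2⟩

theorem mem_msum {a : G} {l : Multiset (Multiset G)} (h : a ∈ l.sum) : ∃ U ∈ l, a ∈ U := by
  induction l using Multiset.induction_on with
  | empty => simp at h
  | cons U l ih =>
    rw [Multiset.sum_cons, Multiset.mem_add] at h
    rcases h with h | h
    · exact ⟨U, Multiset.mem_cons_self U l, h⟩
    · obtain ⟨V, hV, hh⟩ := ih h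
      exact ⟨V, Multiset.mem_cons_of_mem hV, hh⟩

theorem SumOf.zero_notMem {c : ℕ} (hc : 2 ≤ c) {A : Multiset G} (hA : SumOf c A) : (0 : G) ∉ A := by
  obtain ⟨l, h1, rfl⟩ := hA
  intro h
  obtain ⟨U, hU, h0⟩ := mem_msum h
  have := minZS_zero_mem (h1 U hU).1 h0
  have h2 := (h1 U hU).2
  rw [this] at h2
  simp at h2
  omega

theorem LSet_bdd (A : Multiset G) : BddAbove (LSet A) := by
  refine ⟨A.card + zc A, ?_⟩
  rintro k ⟨l, rfl, h, rfl⟩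
  have := sum_low l h
  omega

theorem LSet_bounds [Finite G] (hD : 3 ≤ DavC G) {A : Multiset G} (h0 : (0 : G) ∉ A) {k : ℕ} (hk : k ∈ LSet A) :
    2 * k ≤ A.card ∧ A.card ≤ DavC G * k := by
  obtain ⟨l, rfl, h, rfl⟩ := hk
  have h1 := sum_low l h
  have h2 := sum_high hD l h
  rw [zc_eq_zero.mpr h0] at h1 h2
  omega

theorem Brho_iff [Finite G] (hD : 3 ≤ DavC G) (A : Multiset G) :
    A ∈ Brho G ↔ SumOf (DavC G) A ∧ SumOf 2 A := by
  constructor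
  · rintro ⟨hs, rfl | hr⟩
    · exact ⟨SumOf.zero, SumOf.zero⟩
    have hDq : (3 : ℚ) ≤ DavC G := by exact_mod_cast hD
    have hne : (LSet A).Nonempty := by
      by_contra h
      rw [Set.not_nonempty_iff_eq_empty] at h
      have h3 : rhoSet ∅ = 0 := by simp [rhoSet]
      rw [h, h3] at hr
      linarith
    have hmin0 : sInf (LSet A) ≠ 0 := by
      intro h
      rw [rhoSet, h, Nat.cast_zero, div_zero] at hr
      linarith
    have hmul : 2 * sSup (LSet A) = DavC G * sInf (LSet A) := by
      rw [rhoSet, div_eq_div_iff (by exact_mod_cast hmin0) (by norm_num)] at hr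
      have : ((2 * sSup (LSet A) : ℕ) : ℚ) = ((DavC G * sInf (LSet A) : ℕ) : ℚ) := by
        push_cast; linarith
      exact_mod_cast this
    obtain ⟨l, hl1, hl2, hl3⟩ := Nat.sInf_mem hne
    obtain ⟨m, hm1, hm2, hm3⟩ := Nat.sSup_mem hne (LSet_bdd A)
    have b1 := sum_high hD l hl2
    have b2 := sum_low m hm2
    rw [hl1, hl3] at b1
    rw [hm1, hm3] at b2
    have hz : zc A = 0 := by omega
    have h0 := zc_eq_zero.mp hz
    refine ⟨⟨l, ?_, hl3⟩, ⟨m, ?_, hm3⟩⟩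
    · intro U hU
      refine ⟨hl2 U hU, ?_⟩
      refine (card_sum_le (DavC G) l (fun V hV => card_le_D (hl2 V hV))).2 ?_ U hU
      rw [hl1, hl3]; omega
    · intro U hU
      refine ⟨hm2 U hU, ?_⟩
      refine (card_sum_ge 2 m (fun V hV => minZS_two_le (hm2 V hV) ?_)).2 ?_ U hU
      · intro h; apply h0; rw [← hm3]
        exact Multiset.mem_of_le (Multiset.single_le_sum (by simp) _ hV) h
      rw [hm1, hm3]; omega
  · rintro ⟨h1, h2⟩
    refine ⟨h1.sum_eq, ?_⟩
    by_cases hA : A = 0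
    · exact Or.inl hA
    right
    have h0 := h1.zero_notMem (by omega)
    have hc : A.card ≠ 0 := by simpa using hA
    obtain ⟨k, hk, ek⟩ := h1.mem_LSet
    obtain ⟨j, hj, ej⟩ := h2.mem_LSet
    have hinf : sInf (LSet A) = k := by
      apply le_antisymm (Nat.sInf_le hk)
      have := (LSet_bounds hD h0 (Nat.sInf_mem ⟨k, hk⟩)).2
      rw [ek] at this
      exact Nat.le_of_mul_le_mul_left this (by omega)
    have hsup : sSup (LSet A) = j := by
      apply le_antisymm _ (le_csSup (LSet_bdd A) hj)
      have := (LSet_bounds hD h0 (Nat.sSup_mem ⟨k, hk⟩ (LSet_bdd A))).1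
      omega
    have hk0 : k ≠ 0 := by rintro rfl; simp at ek; exact hA ek
    rw [rhoSet, hinf, hsup, div_eq_div_iff (by exact_mod_cast hk0) (by norm_num)]
    have : j * 2 = DavC G * k := by omega
    exact_mod_cast this

theorem Brho_add [Finite G] (hD : 3 ≤ DavC G) {A B : Multiset G} (hA : A ∈ Brho G) (hB : B ∈ Brho G) :
    A + B ∈ Brho G := by
  rw [Brho_iff hD] at *
  exact ⟨hA.1.add hB.1, hA.2.add hB.2⟩

theorem Brho_zero [Finite G] : (0 : Multiset G) ∈ Brho G := ⟨by simp, Or.inl rfl⟩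

theorem interval_of [Finite G] (hD : 3 ≤ DavC G) {A : Multiset G} (h0 : (0 : G) ∉ A) {p q : ℕ}
    (hpq : Set.Icc p q ⊆ LSet A) (hle : p ≤ q) (hp : A.card = DavC G * p) (hq : A.card = 2 * q) :
    IsIntervalSet (LSet A) := by
  have hne : (LSet A).Nonempty := ⟨p, hpq ⟨le_rfl, hle⟩⟩
  refine ⟨hne, ?_⟩
  apply Set.Subset.antisymm
  · intro x hx
    exact ⟨Nat.sInf_le hx, le_csSup (LSet_bdd A) hx⟩
  · intro x hx
    apply hpq
    have h1 := (LSet_bounds hD h0 (Nat.sInf_mem hne)).2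
    have h2 := (LSet_bounds hD h0 (Nat.sSup_mem hne (LSet_bdd A))).1
    rw [hp] at h1
    have h1 := Nat.le_of_mul_le_mul_left h1 (by omega)
    obtain ⟨h3, h4⟩ := hx
    exact ⟨by omega, by omega⟩

theorem atoms_finite [Finite G] (hD : 3 ≤ DavC G) : {U : Multiset G | IsAtomBrho U}.Finite := by
  let T := {U : Multiset G | IsMinZS U}
  have : Finite T := minZS_finite.to_subtype
  have := ms_wqo T
  let σ : Multiset T → Multiset G := fun l => (l.map Subtype.val).sum
  let S : Set (Multiset T × Multiset T) :=
    {x | (∀ U ∈ x.1, U.1.card = DavC G) ∧ (∀ U ∈ x.2, U.1.card = 2) ∧ σ x.1 = σ x.2 ∧ IsAtomBrho (σ x.1)}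
  have hadd : ∀ x y, σ (x + y) = σ x + σ y := by intro x y; simp [σ]
  have hSumOf : ∀ c (x : Multiset T), (∀ U ∈ x, U.1.card = c) → SumOf c (σ x) := by
    intro c x hx
    refine ⟨x.map Subtype.val, ?_, rfl⟩
    intro U hU
    obtain ⟨V, hV, rfl⟩ := Multiset.mem_map.mp hU
    exact ⟨V.2, hx V hV⟩
  have hpos : ∀ x : Multiset T, σ x = 0 → x = 0 := by
    intro x hx
    by_contra h
    obtain ⟨U, hU⟩ := Multiset.exists_mem_of_ne_zero h
    have : U.1 ≤ σ x := Multiset.single_le_sum (by simp) _ (Multiset.mem_map_of_mem _ hU)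
    rw [hx] at this
    exact U.2.1 (by simpa using this)
  have hlift : ∀ c (A : Multiset G), SumOf c A → ∃ x : Multiset T, (∀ U ∈ x, U.1.card = c) ∧ σ x = A := by
    rintro c A ⟨l, h1, h2⟩
    refine ⟨l.pmap (fun U h => ⟨U, h⟩) (fun U hU => (h1 U hU).1), ?_, ?_⟩
    · intro U hU
      obtain ⟨V, hV, rfl⟩ := Multiset.mem_pmap.mp hU
      exact (h1 V hV).2
    · simp only [σ, Multiset.map_pmap]
      rw [← h2]; congr 1
      exact (Multiset.pmap_eq_map _ _ _ _).trans (Multiset.map_id' l)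
  have hS : S.Finite := by
    apply WellQuasiOrderedLE.finite_of_isAntichain
    rintro ⟨x, y⟩ ⟨hx1, hx2, hx3, hx4⟩ ⟨x', y'⟩ ⟨hy1, hy2, hy3, hy4⟩ hne ⟨hle1, hle2⟩
    obtain ⟨z, rfl⟩ := exists_add_of_le hle1
    obtain ⟨w, rfl⟩ := exists_add_of_le hle2
    simp only at *
    have hzw : σ z = σ w := by
      rw [hadd, hadd, hx3] at hy3
      exact add_left_cancel hy3
    have hz : σ z ∈ Brho G := by
      rw [Brho_iff hD]
      refine ⟨hSumOf _ z fun U hU => hy1 U (Multiset.mem_add.mpr (Or.inr hU)), ?_⟩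
      rw [hzw]
      exact hSumOf _ w fun U hU => hy2 U (Multiset.mem_add.mpr (Or.inr hU))
    rcases hy4.2.2 _ hx4.1 _ hz (hadd x z) with h | h
    · exact hx4.2.1 h
    · apply hne
      have h1 := hpos z h
      have h2 := hpos w (hzw ▸ h)
      simp [h1, h2]
  refine (hS.image (fun x => σ x.1)).subset ?_
  intro A hA
  obtain ⟨h1, h2⟩ := (Brho_iff hD A).mp hA.1
  obtain ⟨x, hx, ex⟩ := hlift _ _ h1
  obtain ⟨y, hy, ey⟩ := hlift _ _ h2
  refine ⟨(x, y), ⟨hx, hy, ex.trans ey.symm, ?_⟩, ex⟩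
  show IsAtomBrho (σ x)
  rw [ex]; exact hA

theorem exists_factB [Finite G] (A : Multiset G) (hA : A ∈ Brho G) : ∃ n, n ∈ LSetB A := by
  induction hn : A.card using Nat.strong_induction_on generalizing A with
  | _ n ih =>
    by_cases h0 : A = 0
    · exact ⟨0, 0, by simp, by simp, by simp [h0]⟩
    by_cases hat : IsAtomBrho A
    · exact ⟨1, {A}, by simp, by simpa using hat, by simp⟩
    have : ∃ V ∈ Brho G, ∃ W ∈ Brho G, A = V + W ∧ V ≠ 0 ∧ W ≠ 0 := by
      by_contra hc
      apply hat
      refine ⟨hA, h0, fun V hV W hW e => ?_⟩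
      by_contra h
      push Not at h
      exact hc ⟨V, hV, W, hW, e, h.1, h.2⟩
    obtain ⟨V, hV, W, hW, e, hV0, hW0⟩ := this
    have c1 : V.card ≠ 0 := by simpa using hV0
    have c2 : W.card ≠ 0 := by simpa using hW0
    have c3 : A.card = V.card + W.card := by rw [e]; simp
    obtain ⟨a, l, h1, h2, h3⟩ := ih V.card (by omega) V hV rfl
    obtain ⟨b, m, h4, h5, h6⟩ := ih W.card (by omega) W hW rfl
    refine ⟨a + b, l + m, by simp [h1, h4], ?_, by simp [h3, h6, e]⟩
    intro U hU
    rcases Multiset.mem_add.mp hU with h | h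
    · exact h2 U h
    · exact h5 U h

theorem LSetB_mem_Brho [Finite G] (hD : 3 ≤ DavC G) {n : ℕ} {A : Multiset G} (h : n ∈ LSetB A) : A ∈ Brho G := by
  obtain ⟨l, -, h, rfl⟩ := h
  induction l using Multiset.induction_on with
  | empty => simpa using Brho_zero
  | cons U l ih =>
    have ih := ih (fun V hV => h V (Multiset.mem_cons_of_mem hV))
    rw [Multiset.sum_cons]
    exact Brho_add hD (h U (Multiset.mem_cons_self U l)).1 ih

theorem LSetB_add {A B : Multiset G} {a b : ℕ} (ha : a ∈ LSetB A) (hb : b ∈ LSetB B) :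
    a + b ∈ LSetB (A + B) := by
  obtain ⟨l, h1, h2, h3⟩ := ha
  obtain ⟨m, h4, h5, h6⟩ := hb
  refine ⟨l + m, by simp [h1, h4], ?_, by simp [h3, h6]⟩
  intro U hU
  rcases Multiset.mem_add.mp hU with h | h
  · exact h2 U h
  · exact h5 U h

theorem zs_two_le {U : Multiset G} (h : U ≠ 0) (hs : U.sum = 0) (h0 : (0 : G) ∉ U) : 2 ≤ U.card := by
  by_contra hc
  have h1 : U.card ≠ 0 := by simpa using h
  have h2 : U.card = 1 := by omega
  obtain ⟨g, rfl⟩ := Multiset.card_eq_one.mp h2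
  simp at hs
  simp [hs] at h0

theorem small_atom {U : Multiset G} (hne : U ≠ 0) (hs : U.sum = 0) (h0 : (0 : G) ∉ U) (hc : U.card ≤ 3) :
    IsMinZS U := by
  refine ⟨hne, hs, fun V hV hV0 hVs => ?_⟩
  obtain ⟨W, rfl⟩ := exists_add_of_le hV
  by_cases hW : W = 0
  · simp [hW]
  exfalso
  rw [Multiset.sum_add, hVs, zero_add] at hs
  rw [Multiset.mem_add, not_or] at h0
  have h1 := zs_two_le hV0 hVs h0.1
  have h2 := zs_two_le hW hs h0.2
  rw [Multiset.card_add] at hc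
  omega

/-- negation of a sequence -/
def ng (U : Multiset G) : Multiset G := U.map (fun g => -g)

theorem ng_ng (U : Multiset G) : ng (ng U) = U := by simp [ng]
theorem ng_add (U V : Multiset G) : ng (U + V) = ng U + ng V := by simp [ng]
theorem ng_card (U : Multiset G) : (ng U).card = U.card := by simp [ng]
theorem ng_sum (U : Multiset G) : (ng U).sum = - U.sum := by simp only [ng, Multiset.sum_map_neg']
theorem ng_eq_zero (U : Multiset G) : ng U = 0 ↔ U = 0 := by simp [ng]
theorem ng_cons (g : G) (U : Multiset G) : ng (g ::ₘ U) = {-g} + ng U := by simp [ng]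

theorem ng_minZS {U : Multiset G} (h : IsMinZS U) : IsMinZS (ng U) := by
  refine ⟨by rw [Ne, ng_eq_zero]; exact h.1, by rw [ng_sum, h.2.1, neg_zero], fun V hV hV0 hs => ?_⟩
  have h1 : ng V ≤ U := by
    have := Multiset.map_le_map (f := fun g : G => -g) hV
    change ng V ≤ ng (ng U) at this
    rwa [ng_ng] at this
  have := h.2.2 (ng V) h1 (by rw [Ne, ng_eq_zero]; exact hV0) (by rw [ng_sum, hs, neg_zero])
  rw [← this, ng_ng]

theorem pairs (U : Multiset G) (h : (0 : G) ∉ U) : SumOf 2 (U + ng U) := by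
  induction U using Multiset.induction_on with
  | empty => simpa [ng] using SumOf.zero
  | cons a U ih =>
    rw [Multiset.mem_cons, not_or] at h
    have ih := ih h.2
    have e : a ::ₘ U + ng (a ::ₘ U) = ({a, -a} : Multiset G) + (U + ng U) := by
      rw [ng_cons, Multiset.insert_eq_cons, ← Multiset.singleton_add, ← Multiset.singleton_add]; abel
    rw [e]
    refine SumOf.add ⟨{{a, -a}}, ?_, by simp⟩ ih
    intro W hW
    rw [Multiset.mem_singleton] at hW
    subst hW
    refine ⟨small_atom (by simp) (by simp) ?_ (by simp), by simp⟩
    simp only [Multiset.insert_eq_cons, Multiset.mem_cons, Multiset.mem_singleton]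
    rintro (h1 | h1)
    · exact h.1 h1
    · exact h.1 (by simpa [eq_comm] using h1)

theorem le_cons_cases {a : G} {V S : Multiset G} (h : V ≤ a ::ₘ S) :
    V ≤ S ∨ ∃ V', V = a ::ₘ V' ∧ V' ≤ S := by
  by_cases ha : a ∈ V
  · obtain ⟨V', rfl⟩ := Multiset.exists_cons_of_mem ha
    exact Or.inr ⟨V', rfl, (Multiset.cons_le_cons_iff a).mp h⟩
  · exact Or.inl ((Multiset.le_cons_of_notMem ha).mp h)

theorem zsfree {a : G} {S : Multiset G} (h : IsMinZS (a ::ₘ S)) {V : Multiset G} (hV : V ≤ S)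
    (hs : V.sum = 0) : V = 0 := by
  by_contra h0
  have h1 := h.2.2 V (hV.trans (Multiset.le_cons_self S a)) h0 hs
  have := Multiset.card_le_card hV
  rw [h1] at this
  simp at this

theorem part_atom {a g : G} {S V : Multiset G} (h : IsMinZS (a ::ₘ S)) (hV : V ≤ S)
    (hs : g + V.sum = 0) : IsMinZS (g ::ₘ V) := by
  refine ⟨by simp, by simpa using hs, fun X hX hX0 hXs => ?_⟩
  rcases le_cons_cases hX with h1 | ⟨X', rfl, h1⟩
  · exact absurd (zsfree h (h1.trans hV) hXs) hX0
  · obtain ⟨Y, rfl⟩ := exists_add_of_le h1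
    rw [Multiset.sum_cons] at hXs
    rw [Multiset.sum_add, ← add_assoc, hXs, zero_add] at hs
    have : Y = 0 := zsfree h ((Multiset.le_add_left Y X').trans hV) hs
    simp [this]

theorem three_mem [Finite G] {g₁ g₂ : G} {T S : Multiset G} (h1 : IsMinZS (g₁ ::ₘ g₂ ::ₘ T))
    (h2 : IsMinZS ((g₁ + g₂) ::ₘ S)) (hc : ((g₁ + g₂) ::ₘ S).card = DavC G) :
    3 ∈ LSet ((g₁ ::ₘ g₂ ::ₘ T) + ((g₁ + g₂) ::ₘ S)) := by
  have hA : IsMinZS ((g₁ + g₂) ::ₘ T) := by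
    have hs := h1.2.1
    simp only [Multiset.sum_cons] at hs
    refine ⟨by simp, by simp [add_assoc, hs], fun V hV hV0 hVs => ?_⟩
    rcases le_cons_cases hV with h | ⟨V', rfl, h⟩
    · exact absurd (zsfree h1 (h.trans (Multiset.le_cons_self T g₂)) hVs) hV0
    · have := h1.2.2 (g₁ ::ₘ g₂ ::ₘ V')
        (Multiset.cons_le_cons _ (Multiset.cons_le_cons _ h)) (by simp)
        (by simpa [add_assoc] using hVs)
      rw [Multiset.cons_inj_right, Multiset.cons_inj_right] at this
      rw [this]
  have hs2 : g₁ + g₂ + S.sum = 0 := by simpa using h2.2.1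
  have hB : 2 ∈ LSet (g₁ ::ₘ g₂ ::ₘ S) := by
    have hnot : ¬ IsMinZS (g₁ ::ₘ g₂ ::ₘ S) := by
      intro h
      have := card_le_D h
      simp at this hc
      omega
    have key : ∃ V, V ≤ S ∧ (g₁ + V.sum = 0 ∨ g₂ + V.sum = 0) := by
      by_contra hcon
      push Not at hcon
      apply hnot
      refine ⟨by simp, by simpa [add_assoc] using hs2, fun V hV hV0 hVs => ?_⟩
      rcases le_cons_cases hV with h | ⟨V', rfl, h⟩
      · rcases le_cons_cases h with h | ⟨V'', rfl, h'⟩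
        · exact absurd (zsfree h2 h hVs) hV0
        · exact absurd (by simpa using hVs) (hcon V'' h').2
      · rcases le_cons_cases h with h | ⟨V'', rfl, h'⟩
        · exact absurd (by simpa using hVs) (hcon V' h).1
        · have := h2.2.2 ((g₁ + g₂) ::ₘ V'') (Multiset.cons_le_cons _ h') (by simp)
            (by simpa [add_assoc] using hVs)
          rw [Multiset.cons_inj_right] at this
          rw [this]
    obtain ⟨V, hV, hor⟩ := key
    obtain ⟨W, rfl⟩ := exists_add_of_le hV
    rw [Multiset.sum_add] at hs2
    have hW : W ≤ V + W := Multiset.le_add_left W V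
    rcases hor with h | h
    · have h' : g₂ + W.sum = 0 := by
        have : g₁ + g₂ + (V.sum + W.sum) = (g₁ + V.sum) + (g₂ + W.sum) := by abel
        rw [this, h, zero_add] at hs2; exact hs2
      have e : g₁ ::ₘ g₂ ::ₘ (V + W) = (g₁ ::ₘ V) + (g₂ ::ₘ W) := by
        simp only [← Multiset.singleton_add]; abel
      rw [e]
      exact LSet_add (LSet_one (part_atom h2 hV h)) (LSet_one (part_atom h2 hW h'))
    · have h' : g₁ + W.sum = 0 := by
        have : g₁ + g₂ + (V.sum + W.sum) = (g₂ + V.sum) + (g₁ + W.sum) := by abel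
        rw [this, h, zero_add] at hs2; exact hs2
      have e : g₁ ::ₘ g₂ ::ₘ (V + W) = (g₂ ::ₘ V) + (g₁ ::ₘ W) := by
        simp only [← Multiset.singleton_add]; abel
      rw [e]
      exact LSet_add (LSet_one (part_atom h2 hV h)) (LSet_one (part_atom h2 hW h'))
  have e : (g₁ ::ₘ g₂ ::ₘ T) + ((g₁ + g₂) ::ₘ S) = ((g₁ + g₂) ::ₘ T) + (g₁ ::ₘ g₂ ::ₘ S) := by
    simp only [← Multiset.singleton_add]; abel
  rw [e]
  exact LSet_add (LSet_one hA) hB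

theorem propP_D (hP : PropertyP G) : 3 ≤ DavC G := by
  obtain ⟨g₁, g₂, U₁, U₂, h1, h2, c1, c2, hle, hm⟩ := hP
  have h : 2 ≤ DavC G := by
    have := Multiset.card_le_card hle
    rw [c1] at this
    simpa using this
  by_contra hc
  have hD : DavC G = 2 := by omega
  have e : ({g₁, g₂} : Multiset G) = U₁ := Multiset.eq_of_le_of_card_le hle (by rw [c1, hD]; simp)
  have hs := h1.2.1
  rw [← e] at hs
  simp at hs
  rw [hs] at hm
  rw [minZS_zero_mem h2 hm, hD] at c2
  simp at c2

theorem exists_V [Finite G] (hP : PropertyP G) : ∃ V : Multiset G, SumOf (DavC G) V ∧ SumOf 2 V ∧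
    V.card = 4 * DavC G ∧
    4 ∈ LSet V ∧ 5 ∈ LSet V ∧ (2 * DavC G) ∈ LSet V ∧ (2 * DavC G - 1) ∈ LSet V := by
  have hD := propP_D hP
  obtain ⟨g₁, g₂, U₁, U₂, h1, h2, c1, c2, hle, hm⟩ := hP
  obtain ⟨T, rfl⟩ := exists_add_of_le hle
  obtain ⟨S, rfl⟩ := Multiset.exists_cons_of_mem hm
  have e0 : ({g₁, g₂} : Multiset G) + T = g₁ ::ₘ g₂ ::ₘ T := by
    rw [Multiset.insert_eq_cons, Multiset.cons_add, Multiset.singleton_add]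
  rw [e0] at h1 c1
  clear hle hm e0
  have hsing : ∀ U : Multiset G, IsMinZS U → U.card = DavC G → SumOf (DavC G) U := by
    intro U hU hc
    exact ⟨{U}, by simpa using ⟨hU, hc⟩, by simp⟩
  have s1 := hsing _ h1 c1
  have s2 := hsing _ h2 c2
  have s3 := hsing _ (ng_minZS h1) (by rw [ng_card, c1])
  have s4 := hsing _ (ng_minZS h2) (by rw [ng_card, c2])
  have z1 := (s1.add s2).zero_notMem (by omega)
  set U₁ := g₁ ::ₘ g₂ ::ₘ T with hU1
  set U₂ := (g₁ + g₂) ::ₘ S with hU2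
  have p := pairs _ z1
  have hcard : ((U₁ + U₂) + ng (U₁ + U₂)).card = 4 * DavC G := by
    rw [Multiset.card_add, ng_card, Multiset.card_add, c1, c2]; ring
  refine ⟨(U₁ + U₂) + ng (U₁ + U₂), ?_, p, hcard, ?_, ?_, ?_, ?_⟩
  · rw [ng_add]; exact (s1.add s2).add (s3.add s4)
  · rw [ng_add]
    exact LSet_add (LSet_add (LSet_one h1) (LSet_one h2))
      (LSet_add (LSet_one (ng_minZS h1)) (LSet_one (ng_minZS h2)))
  · rw [ng_add]
    exact LSet_add (three_mem h1 h2 c2)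
      (LSet_add (LSet_one (ng_minZS h1)) (LSet_one (ng_minZS h2)))
  · obtain ⟨k, hk, hc⟩ := p.mem_LSet
    have : k = 2 * DavC G := by omega
    rwa [← this]
  · simp only [hU1, hU2, Multiset.mem_add, Multiset.mem_cons, not_or] at z1
    obtain ⟨⟨n1, n2, n3⟩, n4, n5⟩ := z1
    have p' := pairs (T + S) (by simp [n3, n5])
    obtain ⟨k, hk, hc⟩ := p'.mem_LSet
    have hk' : 1 + 1 + k = 2 * DavC G - 1 := by
      rw [Multiset.card_add, ng_card, Multiset.card_add] at hc
      simp only [hU1, hU2, Multiset.card_cons] at c1 c2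
      omega
    have a1 : IsMinZS ({g₁ + g₂, -g₁, -g₂} : Multiset G) := by
      refine small_atom (by simp) (by simp; abel) ?_ (by simp)
      simp only [Multiset.insert_eq_cons, Multiset.mem_cons, Multiset.mem_singleton, not_or]
      exact ⟨n4, fun h => n1 (by simpa [eq_comm] using h), fun h => n2 (by simpa [eq_comm] using h)⟩
    have a2 := ng_minZS a1
    have := LSet_add (LSet_add (LSet_one a1) (LSet_one a2)) hk
    rw [hk'] at this
    convert this using 2
    simp only [hU1, hU2, ng, Multiset.insert_eq_cons, Multiset.map_add, Multiset.map_cons,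
      Multiset.map_singleton, neg_neg, ← Multiset.singleton_add]
    abel

theorem ext_one {X C : Multiset G} {p q m M : ℕ} (h : Set.Icc p q ⊆ LSet X) (hpq : p ≤ q)
    (hm : m ∈ LSet C) (hM : M ∈ LSet C) (hc : M + p ≤ q + m + 1) :
    Set.Icc (p + m) (q + M) ⊆ LSet (X + C) := by
  rintro x ⟨h1, h2⟩
  by_cases hx : x ≤ q + m
  · have : x = (x - m) + m := by omega
    rw [this]
    exact LSet_add (h ⟨by omega, by omega⟩) hm
  · have : x = (x - M) + M := by omega
    rw [this]
    exact LSet_add (h ⟨by omega, by omega⟩) hM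

theorem ext_n {X C : Multiset G} {p q m M : ℕ} (h : Set.Icc p q ⊆ LSet X) (hpq : p ≤ q)
    (hm : m ∈ LSet C) (hM : M ∈ LSet C) (hmM : m ≤ M) (hc : M + p ≤ q + m + 1) (r : ℕ) :
    Set.Icc (p + r * m) (q + r * M) ⊆ LSet (X + r • C) := by
  induction r with
  | zero => simpa using h
  | succ r ih =>
    have hr : r * m ≤ r * M := Nat.mul_le_mul_left r hmM
    have := ext_one ih (by omega) hm hM (by omega)
    rw [succ_nsmul, ← add_assoc]
    convert this using 2 <;> ring

theorem SumOf.nsmul {c : ℕ} {A : Multiset G} (h : SumOf c A) (r : ℕ) : SumOf c (r • A) := by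
  induction r with
  | zero => simpa using SumOf.zero
  | succ r ih => rw [succ_nsmul]; exact ih.add h

theorem exists_V0 [Finite G] (hP : PropertyP G) (K : ℕ) : ∃ (V : Multiset G) (p q : ℕ),
    V ∈ Brho G ∧ V ≠ 0 ∧ Set.Icc p q ⊆ LSet V ∧ p + K ≤ q ∧ V.card = DavC G * p ∧ V.card = 2 * q := by
  have hD := propP_D hP
  obtain ⟨V, s1, s2, hc, h4, h5, h2D, h2D1⟩ := exists_V hP
  set D := DavC G with hDdef
  have hz : Set.Icc 0 0 ⊆ LSet (0 : Multiset G) := by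
    rintro x ⟨_, h⟩
    have : x = 0 := by omega
    rw [this]; exact LSet_zero
  have a1 := ext_n hz le_rfl h4 h5 (by omega) (by omega) (2 * D)
  have a2 := ext_n hz le_rfl h2D1 h2D (by omega) (by omega) (2 * D)
  have hmm : 2 * D * (2 * D - 1) + 2 * D = 2 * D * (2 * D) := by
    obtain ⟨d, hd⟩ : ∃ d, D = d + 1 := ⟨D - 1, by omega⟩
    have : 2 * (d + 1) - 1 = 2 * d + 1 := by omega
    rw [hd, this]; ring
  have b1 := ext_n a1 (by omega) h4 h2D (by omega) (by omega) (2 * D)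
  have b2 := ext_n a2 (by omega) h4 h2D (by omega) (by omega) (2 * D)
  have hV1 : Set.Icc (16 * D) (2 * (2 * D * (2 * D))) ⊆ LSet (0 + (2 * D) • V + (2 * D) • V) := by
    rintro x ⟨hx1, hx2⟩
    by_cases hx : x ≤ 0 + 2 * D * 5 + 2 * D * (2 * D)
    · exact b1 ⟨by omega, hx⟩
    · exact b2 ⟨by omega, by omega⟩
  set V1 := 0 + (2 * D) • V + (2 * D) • V with hV1def
  have hDD : 3 * D ≤ D * D := Nat.mul_le_mul_right D hD
  have e1 : 2 * D * (2 * D) = 4 * (D * D) := by ring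
  have hle : 16 * D + 1 ≤ 2 * (2 * D * (2 * D)) := by rw [e1]; omega
  have b3 := ext_n hV1 (by omega) (hV1 ⟨le_rfl, by omega⟩) (hV1 ⟨by omega, le_rfl⟩) (by omega) (by omega) K
  have t1 : SumOf D V1 := ((SumOf.zero).add (s1.nsmul _)).add (s1.nsmul _)
  have t2 : SumOf 2 V1 := ((SumOf.zero).add (s2.nsmul _)).add (s2.nsmul _)
  have hc1 : V1.card = 16 * (D * D) := by
    simp only [hV1def, Multiset.card_add, Multiset.card_nsmul, hc, Multiset.card_zero, smul_eq_mul]; ring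
  have hcc : (V1 + K • V1).card = 16 * (D * D) + K * (16 * (D * D)) := by
    rw [Multiset.card_add, Multiset.card_nsmul, hc1]
  refine ⟨V1 + K • V1, _, _, (Brho_iff hD _).mpr ⟨t1.add (t1.nsmul K), t2.add (t2.nsmul K)⟩, ?_, b3, ?_, ?_, ?_⟩
  · intro h
    rw [h, Multiset.card_zero] at hcc
    omega
  · have := Nat.mul_le_mul_left K hle
    rw [mul_add, mul_one] at this
    omega
  · rw [hcc]; ring
  · rw [hcc]; ring

theorem exists_good [Finite G] (hP : PropertyP G) : ∃ V : Multiset G, V ∈ Brho G ∧ V ≠ 0 ∧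
    ∀ (n : ℕ) (A : Multiset G), n ∈ LSetB A → IsIntervalSet (LSet (V + A)) := by
  have hD := propP_D hP
  obtain ⟨K, hK⟩ := ((atoms_finite (G := G) hD).image Multiset.card).bddAbove
  obtain ⟨V, p, q, hV, hV0, hpq, hle, hp, hq⟩ := exists_V0 hP K
  refine ⟨V, hV, hV0, ?_⟩
  intro n A hA
  have hB := Brho_add hD hV (LSetB_mem_Brho hD hA)
  have h0 := ((Brho_iff hD _).mp hB).2.zero_notMem le_rfl
  obtain ⟨l, -, hl, rfl⟩ := hA
  clear hB
  have : ∃ p q, Set.Icc p q ⊆ LSet (V + l.sum) ∧ p + K ≤ q ∧ (V + l.sum).card = DavC G * p ∧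
      (V + l.sum).card = 2 * q := by
    clear h0
    induction l using Multiset.induction_on with
    | empty => exact ⟨p, q, by simpa using hpq, hle, by simpa using hp, by simpa using hq⟩
    | cons U l ih =>
      obtain ⟨p, q, i1, i2, i3, i4⟩ := ih (fun W hW => hl W (Multiset.mem_cons_of_mem hW))
      have hU := hl U (Multiset.mem_cons_self U l)
      obtain ⟨s1, s2⟩ := (Brho_iff hD U).mp hU.1
      obtain ⟨m, hm, em⟩ := s1.mem_LSet
      obtain ⟨M, hM, eM⟩ := s2.mem_LSet
      have hcU : U.card ≤ K := hK ⟨U, hU, rfl⟩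
      have h3 : 3 * m ≤ DavC G * m := Nat.mul_le_mul_right m hD
      have e : V + (U ::ₘ l).sum = V + l.sum + U := by rw [Multiset.sum_cons]; abel
      rw [e]
      refine ⟨p + m, q + M, ext_one i1 (by omega) hm hM (by omega), by omega, ?_, ?_⟩
      · rw [Multiset.card_add, mul_add]; omega
      · rw [Multiset.card_add, mul_add]; omega
  obtain ⟨p, q, i1, i2, i3, i4⟩ := this
  exact interval_of hD h0 i1 (by omega) i3 i4

theorem den_poly [Finite G] (hD : 3 ≤ DavC G) (hne : ∃ U : Multiset G, IsAtomBrho U) :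
    (∃ p : Polynomial ℝ, ∀ᶠ n : ℕ in Filter.atTop,
      (({A : Multiset G | n ∈ LSetB A}.ncard : ℕ) : ℝ) = p.eval (n : ℝ)) ∧
    (∀ n, {A : Multiset G | n ∈ LSetB A}.Finite) := by
  have hfin := atoms_finite (G := G) hD
  have : Finite {U : Multiset G | IsAtomBrho U} := hfin.to_subtype
  obtain ⟨N, ⟨e⟩⟩ := Finite.exists_equiv_fin {U : Multiset G | IsAtomBrho U}
  obtain ⟨k, rfl⟩ : ∃ k, N = k + 1 := by
    obtain ⟨U, hU⟩ := hne
    have := (e ⟨U, hU⟩).2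
    exact ⟨N - 1, by omega⟩
  let φ : (Fin (k+1) → ℕ) →+ Multiset G :=
    { toFun := fun x => ∑ i, x i • (e.symm i).1
      map_zero' := by simp
      map_add' := fun x y => by simp [add_smul, Finset.sum_add_distrib] }
  have hφ : ∀ x, φ x = ∑ i, x i • (e.symm i).1 := fun _ => rfl
  have key : ∀ n, φ '' {x | ∑ i, x i = n} = {A : Multiset G | n ∈ LSetB A} := by
    intro n
    apply Set.Subset.antisymm
    · rintro _ ⟨x, hx, rfl⟩
      have hx : ∑ i, x i = n := hx
      refine ⟨∑ i, x i • {(e.symm i).1}, ?_, ?_, ?_⟩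
      · simp [hx]
      · intro U hU
        obtain ⟨i, -, hi⟩ := Multiset.mem_sum.mp hU
        have := Multiset.mem_of_mem_nsmul hi
        rw [Multiset.mem_singleton] at this
        rw [this]; exact (e.symm i).2
      · rw [hφ, ← Multiset.coe_sumAddMonoidHom, map_sum]
        simp only [map_nsmul, Multiset.coe_sumAddMonoidHom, Multiset.sum_singleton]
    · rintro A ⟨l, rfl, hl, rfl⟩
      induction l using Multiset.induction_on with
      | empty => exact ⟨0, by simp, by simp⟩
      | cons U l ih =>
        obtain ⟨x, hx, ex⟩ := ih (fun W hW => hl W (Multiset.mem_cons_of_mem hW))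
        have hx : ∑ i, x i = l.card := hx
        have hU := hl U (Multiset.mem_cons_self U l)
        refine ⟨x + Pi.single (e ⟨U, hU⟩) 1, ?_, ?_⟩
        · change ∑ i, (x + Pi.single (e ⟨U, hU⟩) 1 : Fin (k+1) → ℕ) i = _
          simp [Finset.sum_add_distrib, hx]
        · rw [map_add, ex, Multiset.sum_cons, add_comm]
          congr 1
          rw [hφ, Finset.sum_eq_single (e ⟨U, hU⟩)]
          · simp
          · intro b _ hb
            simp [Pi.single_eq_of_ne hb]
          · simp
  constructor
  · obtain ⟨p, hp⟩ := khovanskii k φ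
    refine ⟨p, ?_⟩
    filter_upwards [hp] with n hn
    rw [← key, hn]
  · intro n
    rw [← key]
    exact ((khS_finite k Set.univ n).subset fun x hx => ⟨trivial, hx⟩).image _
end Arith

theorem stmt18 {G : Type*} [AddCommGroup G] [Fintype G] (hcard : 3 ≤ Fintype.card G)
    (hP : PropertyP G) :
    (∀ n : ℕ,
      {A : Multiset G | A ∈ Brho G ∧ IsIntervalSet (LSet A) ∧ n ∈ LSetB A} ⊆
      {A : Multiset G | A ∈ Brho G ∧ n ∈ LSetB A}) ∧
    Filter.Tendsto
      (fun n : ℕ =>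
        (({A : Multiset G | A ∈ Brho G ∧ IsIntervalSet (LSet A) ∧ n ∈ LSetB A}.ncard : ℝ) /
         ({A : Multiset G | A ∈ Brho G ∧ n ∈ LSetB A}.ncard : ℝ)))
      Filter.atTop (nhds 1) := by
  refine ⟨fun n A hA => ⟨hA.1, hA.2.2⟩, ?_⟩
  have hD := propP_D hP
  obtain ⟨V, hV, hV0, hgood⟩ := exists_good hP
  obtain ⟨m, hm⟩ := exists_factB V hV
  have hat : ∃ U : Multiset G, IsAtomBrho U := by
    obtain ⟨l, -, h2, h3⟩ := hm
    by_contra hc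
    push Not at hc
    apply hV0
    have : l = 0 := Multiset.eq_zero_of_forall_notMem fun U hU => hc U (h2 U hU)
    rw [← h3, this]; simp
  obtain ⟨⟨p, hp⟩, hfin⟩ := den_poly hD hat
  set a : ℕ → ℕ := fun n => {A : Multiset G | n ∈ LSetB A}.ncard with ha
  have hden : ∀ n, {A : Multiset G | A ∈ Brho G ∧ n ∈ LSetB A} = {A : Multiset G | n ∈ LSetB A} := by
    intro n; ext A
    exact ⟨fun h => h.2, fun h => ⟨LSetB_mem_Brho hD h, h⟩⟩
  have hpos : ∀ n, 0 < a n := by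
    intro n
    rw [ha, Set.ncard_pos (hfin n)]
    obtain ⟨U, hU⟩ := hat
    refine ⟨n • U, Multiset.replicate n U, by simp, ?_, by simp⟩
    intro W hW
    rw [Multiset.eq_of_mem_replicate hW]; exact hU
  have hlim := poly_ratio a p hp hpos m
  refine tendsto_of_tendsto_of_tendsto_of_le_of_le' hlim tendsto_const_nhds ?_ ?_
  · filter_upwards [Filter.eventually_ge_atTop m] with n hn
    rw [hden]
    refine div_le_div_of_nonneg_right ?_ (Nat.cast_nonneg _)
    have hsub : (fun A => V + A) '' {A : Multiset G | (n - m) ∈ LSetB A} ⊆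
        {A : Multiset G | A ∈ Brho G ∧ IsIntervalSet (LSet A) ∧ n ∈ LSetB A} := by
      rintro _ ⟨A, hA, rfl⟩
      have hs : n ∈ LSetB (V + A) := by
        have := LSetB_add hm hA
        rwa [Nat.add_sub_cancel' hn] at this
      exact ⟨LSetB_mem_Brho hD hs, hgood _ A hA, hs⟩
    have := Set.ncard_le_ncard hsub ((hfin n).subset fun A hA => hA.2.2)
    rw [Set.ncard_image_of_injective _ (add_right_injective V)] at this
    exact_mod_cast this
  · refine Filter.Eventually.of_forall fun n => ?_
    rw [hden]
    apply div_le_one_of_le₀ _ (Nat.cast_nonneg _)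
    have := Set.ncard_le_ncard (s := {A : Multiset G | A ∈ Brho G ∧ IsIntervalSet (LSet A) ∧ n ∈ LSetB A})
      (fun A hA => hA.2.2) (hfin n)
    exact_mod_cast this
end
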